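/- Let r ≤ m be positive integers and let L be an r×m matrix of integers of full rank r. For every ε > 0 there exists δ = δ(L, ε) > 0 such that the following holds: if A_1, …, A_m are Borel measurable subsets of the circle group T = ℝ/ℤ with S_L(A_1, …, A_m) ≤ δ, then there exist Borel measurable sets E_1, …, E_m ⊆ T with μ_T(E_i) ≤ ε for all i ∈ {1, …, m}, such that ((A_1 \ E_1) × ⋯ × (A_m \ E_m)) ∩ ker_T L = ∅. -/

import Mathlib

open MeasureTheory Set

noncomputable section

/-- The circle group `𝕋 = ℝ/ℤ`, with its normalized Haar (probability) measure `volume`. -/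
abbrev 𝕋 : Type := AddCircle (1 : ℝ)

/-- The group homomorphism `x ↦ Lx` induced by an integer matrix `L`. -/
def Lhom {r m : ℕ} (L : Matrix (Fin r) (Fin m) ℤ) (G : Type*) [AddCommGroup G] :
    (Fin m → G) →+ (Fin r → G) where
  toFun x := fun i => ∑ j, L i j • x j
  map_zero' := by ext i; simp
  map_add' x y := by ext i; simp [smul_add, Finset.sum_add_distrib]

/-- `ker_𝕋 L`, the closed subgroup `{x ∈ 𝕋^m : Lx = 0}` of `𝕋^m`. -/
def kerT {r m : ℕ} (L : Matrix (Fin r) (Fin m) ℤ) : AddSubgroup (Fin m → 𝕋) :=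
  (Lhom L 𝕋).ker

/-!
Removal in `G = ker L` reduces to removal in a simplex. Let `ψ i` be the coordinate homomorphisms of
`G`. The sum of a family of elements `x i ∈ ker (ψ i)`, together with one unconstrained element of
`G`, is Haar distributed, and its image under `ψ i` does not depend on `x i`. Hence the conditions
`ψ i (∑ x) ∈ A i` define a system of sets on a product space, the `i`-th of which ignores the `i`-th
coordinate, and what is removed from that system is averaged back over the fibres of the sum.

A sequence of counterexamples to the removal lemma for such systems gives internal sets with null
intersection on a Loeb space. Call the internal sets depending on the coordinates in `s` the sets of
index `s`. They are independent of every lower family `S` of indices, conditionally on the part of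
`S` below `s`. This allows one to eliminate a maximal index: after an approximation the set `E i` is
described by sets of smaller index on each cell `β` of a finite partition into sets of that index,
and on `β` it is replaced by the set of points at which, as seen from the smaller indices, `β` is
present and `E i` almost fills it. By independence these replacements still have null intersection.
-/

section Loeb

open Filter Topology ENNReal

/-- The space of internal points of the ultraproduct of the `X n` along `hyperfilter ℕ`, encoded by
representing sequences: two sequences that agree almost everywhere are not identified, but no
internal set separates them. It is a copy of `∀ n, X n` because it carries a different
`σ`-algebra, the one generated by the internal sets. -/
def LoebSpace (X : ℕ → Type*) : Type _ := ∀ n, X n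

namespace LoebSpace

variable {X : ℕ → Type*}

/-- The internal set with components `S n`: the points lying in `S n` for almost every `n`. -/
def internal (S : ∀ n, Set (X n)) : Set (LoebSpace X) := {x | ∀ᶠ n in hyperfilter ℕ, x n ∈ S n}

theorem mem_internal {S : ∀ n, Set (X n)} {x : LoebSpace X} :
    x ∈ internal S ↔ ∀ᶠ n in hyperfilter ℕ, x n ∈ S n := Iff.rfl

theorem internal_compl (S : ∀ n, Set (X n)) : internal (fun n ↦ (S n)ᶜ) = (internal S)ᶜ := by
  ext x
  exact Ultrafilter.eventually_not

theorem internal_inter (S T : ∀ n, Set (X n)) :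
    internal (fun n ↦ S n ∩ T n) = internal S ∩ internal T := by
  ext x
  exact eventually_and

theorem internal_union (S T : ∀ n, Set (X n)) :
    internal (fun n ↦ S n ∪ T n) = internal S ∪ internal T := by
  ext x
  exact Ultrafilter.eventually_or

theorem internal_iInter {κ : Type*} [Finite κ] (S : κ → ∀ n, Set (X n)) :
    internal (fun n ↦ ⋂ k, S k n) = ⋂ k, internal (S k) := by
  ext x
  simp only [mem_internal, mem_iInter, eventually_all]

theorem internal_empty : internal (fun n ↦ (∅ : Set (X n))) = ∅ := by
  ext x
  simp [mem_internal, NeBot.ne]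

theorem internal_univ : internal (fun n ↦ (univ : Set (X n))) = univ := by
  ext x
  simp [mem_internal]

theorem internal_subset_internal_iff [∀ n, Nonempty (X n)] {S T : ∀ n, Set (X n)} :
    internal S ⊆ internal T ↔ ∀ᶠ n in hyperfilter ℕ, S n ⊆ T n := by
  refine ⟨fun hST ↦ ?_, fun hST x hx ↦ hST.mp (hx.mono fun n hn hn' ↦ hn' hn)⟩
  have hx : ∀ n, ∃ x, ¬S n ⊆ T n → x ∈ S n \ T n := fun n ↦ by
    by_cases hn : S n ⊆ T n
    · exact ⟨Classical.arbitrary _, fun h ↦ absurd hn h⟩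
    · exact (sdiff_nonempty.2 hn).imp fun x hx _ ↦ hx
  choose x hx using hx
  by_contra hne
  rw [← Ultrafilter.eventually_not] at hne
  have hxT := hST (a := x) (hne.mono fun n hn ↦ (hx n hn).1)
  obtain ⟨n, hn, hnT⟩ := (hne.and hxT).exists
  exact (hx n hn).2 hnT

theorem internal_eq_empty_iff [∀ n, Nonempty (X n)] {S : ∀ n, Set (X n)} :
    internal S = ∅ ↔ ∀ᶠ n in hyperfilter ℕ, S n = ∅ := by
  rw [← subset_empty_iff, ← internal_empty, internal_subset_internal_iff]
  simp only [subset_empty_iff]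

theorem nonempty_iInter_internal [∀ n, Nonempty (X n)] {S : ℕ → ∀ n, Set (X n)} (hS : Antitone S)
    (hne : ∀ k, ∀ᶠ n in hyperfilter ℕ, (S k n).Nonempty) : (⋂ k, internal (S k)).Nonempty := by
  have hx : ∀ n, ∃ x, ∀ k ≤ n, (S k n).Nonempty → x ∈ S k n := fun n ↦ by
    classical
    set K := Nat.findGreatest (fun k ↦ (S k n).Nonempty) n
    by_cases hK : (S K n).Nonempty
    · exact hK.imp fun x hx k hk hkn ↦ hS (Nat.le_findGreatest hk hkn) n hx
    · exact ⟨Classical.arbitrary _, fun k hk hkn ↦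
        absurd (Nat.findGreatest_spec (P := fun k ↦ (S k n).Nonempty) hk hkn) hK⟩
  choose x hx using hx
  refine ⟨x, mem_iInter.2 fun k ↦ ?_⟩
  filter_upwards [hne k, Nat.hyperfilter_le_atTop (eventually_ge_atTop k)] with n hn hkn
  exact hx n k hkn hn

theorem exists_eventually_subset_biUnion [∀ n, Nonempty (X n)] {S : ∀ n, Set (X n)}
    {T : ℕ → ∀ n, Set (X n)} (h : internal S ⊆ ⋃ k, internal (T k)) :
    ∃ K, ∀ᶠ n in hyperfilter ℕ, S n ⊆ ⋃ k ∈ Finset.range K, T k n := by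
  by_contra! hne
  obtain ⟨x, hx⟩ := nonempty_iInter_internal
    (S := fun K n ↦ S n \ ⋃ k ∈ Finset.range K, T k n)
    (fun K L hKL n ↦ sdiff_subset_sdiff_right <|
      biUnion_subset_biUnion_left (Finset.range_subset_range.2 hKL))
    (fun K ↦ (hne K).mono fun n ↦ sdiff_nonempty.2)
  rw [mem_iInter] at hx
  obtain ⟨k, hk⟩ := mem_iUnion.1 (h ((hx 0).mono fun n hn ↦ hn.1))
  obtain ⟨n, hnT, hn⟩ := (hk.and (hx (k + 1))).exists
  exact hn.2 (mem_biUnion (Finset.self_mem_range_succ k) hnT)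

/-- The algebra of internal sets with components measurable for `m n`. The argument `m` is explicit
since it will also range over sub-`σ`-algebras of a product. -/
def internalSets (m : ∀ n, MeasurableSpace (X n)) : Set (Set (LoebSpace X)) :=
  {A | ∃ S : ∀ n, Set (X n), (∀ n, MeasurableSet[m n] (S n)) ∧ internal S = A}

theorem isSetAlgebra_internalSets (m : ∀ n, MeasurableSpace (X n)) :
    IsSetAlgebra (internalSets m) where
  empty_mem := ⟨fun _ ↦ ∅, fun n ↦ (m n).measurableSet_empty, internal_empty⟩
  compl_mem := by
    rintro _ ⟨S, hS, rfl⟩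
    exact ⟨_, fun n ↦ (hS n).compl, internal_compl S⟩
  union_mem := by
    rintro _ _ ⟨S, hS, rfl⟩ ⟨T, hT, rfl⟩
    exact ⟨_, fun n ↦ (hS n).union (hT n), internal_union S T⟩

variable [∀ n, MeasurableSpace (X n)]

instance : MeasurableSpace (LoebSpace X) :=
  .generateFrom (internalSets fun _ ↦ inferInstance)

theorem measurableSet_internal {S : ∀ n, Set (X n)} (hS : ∀ n, MeasurableSet (S n)) :
    MeasurableSet (internal S) :=
  MeasurableSpace.measurableSet_generateFrom ⟨S, hS, rfl⟩

/-- The premeasure of the Loeb measure: the value on an internal set is the limit of the measures of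
its components. The infimum makes this independent of the choice of components. -/
def premeasure (μ : ∀ n, Measure (X n)) (A : Set (LoebSpace X)) : ℝ≥0∞ :=
  ⨅ (T : ∀ n, Set (X n)) (_ : (∀ n, MeasurableSet (T n)) ∧ A ⊆ internal T),
    limUnder (hyperfilter ℕ : Filter ℕ) fun n ↦ μ n (T n)

theorem tendsto_limUnder_hyperfilter {Y : Type*} [TopologicalSpace Y] [CompactSpace Y] [Nonempty Y]
    (f : ℕ → Y) : Tendsto f (hyperfilter ℕ) (𝓝 (limUnder (hyperfilter ℕ : Filter ℕ) f)) :=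
  ((hyperfilter ℕ).map f).le_nhds_lim

variable [∀ n, Nonempty (X n)] (μ : ∀ n, Measure (X n))

theorem tendsto_premeasure_internal {S : ∀ n, Set (X n)} (hS : ∀ n, MeasurableSet (S n)) :
    Tendsto (fun n ↦ μ n (S n)) (hyperfilter ℕ) (𝓝 (premeasure μ (internal S))) := by
  suffices premeasure μ (internal S) = limUnder (hyperfilter ℕ : Filter ℕ) fun n ↦ μ n (S n) from
    this ▸ tendsto_limUnder_hyperfilter _
  refine le_antisymm (iInf₂_le S ⟨hS, Subset.rfl⟩) (le_iInf₂ fun T hT ↦ ?_)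
  refine le_of_tendsto_of_tendsto (tendsto_limUnder_hyperfilter _) (tendsto_limUnder_hyperfilter _)
    ((internal_subset_internal_iff.1 hT.2).mono fun n hn ↦ measure_mono hn)

/-- The premeasure of the Loeb measure as a finitely additive content on the internal sets. -/
def content : AddContent ℝ≥0∞ (internalSets (X := X) fun _ ↦ inferInstance) :=
  IsSetRing.addContent_of_union (premeasure μ) (isSetAlgebra_internalSets _).isSetRing
    (by
      rw [← internal_empty]
      refine tendsto_nhds_unique (tendsto_premeasure_internal μ fun _ ↦ .empty) ?_
      simp)
    (by
      rintro _ _ ⟨S, hS, rfl⟩ ⟨T, hT, rfl⟩ hST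
      rw [disjoint_iff_inter_eq_empty, ← internal_inter, internal_eq_empty_iff] at hST
      rw [← internal_union]
      refine tendsto_nhds_unique
        (tendsto_premeasure_internal μ fun n ↦ (hS n).union (hT n)) ?_
      refine ((tendsto_premeasure_internal μ hS).add (tendsto_premeasure_internal μ hT)).congr' ?_
      filter_upwards [hST] with n hn
      rw [measure_union (disjoint_iff_inter_eq_empty.2 hn) (hT n)])

theorem isSigmaSubadditive_content : (content μ).IsSigmaSubadditive := by
  rintro f hf ⟨S, hS, hSf⟩
  choose T hT hTf using hf
  obtain rfl : (fun k ↦ internal (T k)) = f := funext hTf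
  obtain ⟨K, hK⟩ := exists_eventually_subset_biUnion hSf.le
  rw [← hSf]
  refine le_trans ?_ (ENNReal.sum_le_tsum (Finset.range K))
  refine le_of_tendsto_of_tendsto (tendsto_premeasure_internal μ hS)
    (tendsto_finsetSum _ fun k _ ↦ tendsto_premeasure_internal μ (hT k)) ?_
  filter_upwards [hK] with n hn
  exact (measure_mono hn).trans (measure_biUnion_finset_le _ _)

/-- The Loeb measure: the countably additive extension of the limits of measures of internal
sets. -/
def loebMeasure : Measure (LoebSpace X) :=
  (content μ).measure (isSetAlgebra_internalSets _).isSetRing.isSetSemiring le_rfl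
    (isSigmaSubadditive_content μ)

theorem tendsto_loebMeasure_internal {S : ∀ n, Set (X n)} (hS : ∀ n, MeasurableSet (S n)) :
    Tendsto (fun n ↦ μ n (S n)) (hyperfilter ℕ) (𝓝 (loebMeasure μ (internal S))) := by
  have hS' : internal S ∈ internalSets (X := X) fun _ ↦ inferInstance := ⟨S, hS, rfl⟩
  rw [loebMeasure, AddContent.measure_eq _ _ rfl _ hS']
  exact tendsto_premeasure_internal μ hS

variable [∀ n, IsProbabilityMeasure (μ n)]

instance : IsProbabilityMeasure (loebMeasure μ) where
  measure_univ := by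
    rw [← internal_univ]
    refine tendsto_nhds_unique (tendsto_loebMeasure_internal μ fun _ ↦ .univ) ?_
    simp

theorem tendsto_loebMeasure_real_internal {S : ∀ n, Set (X n)} (hS : ∀ n, MeasurableSet (S n)) :
    Tendsto (fun n ↦ (μ n).real (S n)) (hyperfilter ℕ) (𝓝 ((loebMeasure μ).real (internal S))) :=
  (ENNReal.tendsto_toReal (measure_ne_top _ _)).comp (tendsto_loebMeasure_internal μ hS)

end LoebSpace

end Loeb

section Approximation

open scoped symmDiff

variable {Ω : Type*} {m₀ : MeasurableSpace Ω} {P : Measure Ω} [IsFiniteMeasure P]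

theorem exists_mem_measureReal_symmDiff_lt {𝒜 : Set (Set Ω)} (h𝒜 : IsSetAlgebra 𝒜)
    (hle : .generateFrom 𝒜 ≤ m₀) {E : Set Ω} (hE : MeasurableSet[.generateFrom 𝒜] E) {η : ℝ}
    (hη : 0 < η) : ∃ W ∈ 𝒜, P.real (E ∆ W) < η := by
  have hdense := @Measure.MeasureDense.of_generateFrom_isSetAlgebra_finite _ (_) (P.trim hle) _ _
    h𝒜 rfl
  obtain ⟨W, hW, hEW⟩ := @Measure.MeasureDense.approx _ (_) _ _ hdense E hE (measure_ne_top _ _)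
    η hη
  rw [trim_measurableSet_eq hle
    (hE.symmDiff (MeasurableSpace.measurableSet_generateFrom hW))] at hEW
  exact ⟨W, hW, (ENNReal.lt_ofReal_iff_toReal_lt (measure_ne_top _ _)).1 hEW⟩

theorem abs_measureReal_inter_sub_le {A B A' B' : Set Ω} (hA : MeasurableSet A)
    (hB : MeasurableSet B) (hA' : MeasurableSet A') (hB' : MeasurableSet B') :
    |P.real (A ∩ B) - P.real (A' ∩ B')| ≤ P.real (A ∆ A') + P.real (B ∆ B') := by
  have hsub : (A ∩ B) ∆ (A' ∩ B') ⊆ A ∆ A' ∪ B ∆ B' := by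
    intro ω
    simp only [mem_symmDiff, mem_inter_iff, mem_union]
    tauto
  exact (abs_measureReal_sub_le_measureReal_symmDiff (hA.inter hB).nullMeasurableSet
    (hA'.inter hB').nullMeasurableSet).trans <|
    (measureReal_mono hsub).trans (measureReal_union_le _ _)

theorem measureReal_inter_sub_const_mul_le {D G R D' G' R' : Set Ω} (hD : MeasurableSet D)
    (hG : MeasurableSet G) (hR : MeasurableSet R) (hD' : MeasurableSet D') (hG' : MeasurableSet G')
    (hR' : MeasurableSet R') {c η θ : ℝ} (hc : 0 ≤ c) (hDD' : P.real (D ∆ D') ≤ η)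
    (hGG' : P.real (G ∆ G') ≤ η) (hRR' : P.real (R ∆ R') ≤ θ) :
    P.real (D ∩ R) - c * P.real (G ∩ R) ≤
      P.real (D' ∩ R') - c * P.real (G' ∩ R') + (1 + c) * (η + θ) := by
  have hDR := (abs_le.1 (abs_measureReal_inter_sub_le (P := P) hD hR hD' hR')).2
  have hGR : P.real (G' ∩ R') - P.real (G ∩ R) ≤ η + θ := by
    linarith [(abs_le.1 (abs_measureReal_inter_sub_le (P := P) hG hR hG' hR')).1]
  linarith [mul_le_mul_of_nonneg_left hGR hc]

end Approximation

section ConditionalProbability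

open Filter
open scoped ProbabilityTheory

variable {Ω : Type*} {m m₀ : MeasurableSpace Ω} {P : Measure Ω}

theorem condProb_nonneg (D : Set Ω) : 0 ≤ᵐ[P] P⟦D | m⟧ :=
  condExp_nonneg (ae_of_all _ (indicator_nonneg fun _ _ ↦ zero_le_one))

theorem measurable_condProb (D : Set Ω) : Measurable[m] (P⟦D | m⟧) :=
  stronglyMeasurable_condExp.measurable

variable [IsFiniteMeasure P]

theorem setIntegral_condProb (hm : m ≤ m₀) {Z D : Set Ω} (hZ : MeasurableSet[m] Z)
    (hD : MeasurableSet D) : ∫ ω in Z, (P⟦D | m⟧) ω ∂P = P.real (D ∩ Z) := by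
  rw [setIntegral_condExp hm ((integrable_const 1).indicator hD) hZ, setIntegral_indicator hD,
    setIntegral_one_eq_measureReal, inter_comm]

theorem measureReal_inter_le_of_condProb_le (hm : m ≤ m₀) {Z B D : Set Ω} {c : ℝ}
    (hZ : MeasurableSet[m] Z) (hB : MeasurableSet B) (hD : MeasurableSet D)
    (h : ∀ᵐ ω ∂P, ω ∈ Z → (P⟦B | m⟧) ω ≤ c * (P⟦D | m⟧) ω) :
    P.real (B ∩ Z) ≤ c * P.real (D ∩ Z) := by
  rw [← setIntegral_condProb hm hZ hB, ← setIntegral_condProb hm hZ hD, ← integral_const_mul]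
  exact setIntegral_mono_on_ae integrable_condExp.integrableOn
    (integrable_condExp.const_mul c).integrableOn (hm _ hZ) h

theorem measureReal_le_of_le_condProb (hm : m ≤ m₀) {Z D : Set Ω} {a : ℝ} (hZ : MeasurableSet[m] Z)
    (hD : MeasurableSet D) (h : ∀ ω ∈ Z, a ≤ (P⟦D | m⟧) ω) : a * P.real Z ≤ P.real (D ∩ Z) := by
  rw [← setIntegral_condProb hm hZ hD, mul_comm, ← smul_eq_mul, ← setIntegral_const]
  exact setIntegral_mono_on (integrable_const a).integrableOn integrable_condExp.integrableOn
    (hm _ hZ) h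

end ConditionalProbability

universe u

section Glue

open scoped symmDiff

variable {Ω κ : Type*}

/-- The set which agrees with `V b` on the cell `q ⁻¹' {b}` of the partition given by `q`. -/
def glue (q : Ω → κ) (V : κ → Set Ω) : Set Ω := {ω | ω ∈ V (q ω)}

theorem glue_eq_iUnion (q : Ω → κ) (V : κ → Set Ω) : glue q V = ⋃ b, q ⁻¹' {b} ∩ V b := by
  ext ω
  simp [glue]

theorem glue_sdiff_eq_iUnion (q : Ω → κ) (V : κ → Set Ω) (E : Set Ω) :
    glue q V \ E = ⋃ b, q ⁻¹' {b} ∩ (V b \ E) := by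
  simp only [glue_eq_iUnion, iUnion_sdiff, inter_sdiff_assoc]

theorem glue_mem_of_isSetAlgebra [Finite κ] {𝒜 : Set (Set Ω)} (h𝒜 : IsSetAlgebra 𝒜) {q : Ω → κ}
    {V : κ → Set Ω} (hq : ∀ b, q ⁻¹' {b} ∈ 𝒜) (hV : ∀ b, V b ∈ 𝒜) : glue q V ∈ 𝒜 := by
  have := Fintype.ofFinite κ
  rw [glue_eq_iUnion, ← biUnion_univ, ← Finset.coe_univ]
  exact h𝒜.biUnion_mem Finset.univ fun b _ ↦ h𝒜.inter_mem (hq b) (hV b)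

/-- The sets obtained by gluing `m`-measurable sets along a finite partition into members of `𝒜`. -/
def gluedSets (m : MeasurableSpace Ω) (𝒜 : Set (Set Ω)) : Set (Set Ω) :=
  {A | ∃ (κ : Type) (_ : Finite κ) (q : Ω → κ) (V : κ → Set Ω),
    (∀ b, q ⁻¹' {b} ∈ 𝒜) ∧ (∀ b, MeasurableSet[m] (V b)) ∧ glue q V = A}

variable {m : MeasurableSpace Ω} {𝒜 : Set (Set Ω)}

theorem isSetAlgebra_gluedSets (h𝒜 : IsSetAlgebra 𝒜) : IsSetAlgebra (gluedSets m 𝒜) where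
  empty_mem := ⟨Unit, inferInstance, fun _ ↦ (), fun _ ↦ ∅,
    fun b ↦ by simpa [preimage_const_of_mem] using h𝒜.univ_mem, fun _ ↦ .empty, rfl⟩
  compl_mem := by
    rintro _ ⟨κ, _, q, V, hq, hV, rfl⟩
    exact ⟨κ, ‹_›, q, fun b ↦ (V b)ᶜ, hq, fun b ↦ (hV b).compl, rfl⟩
  union_mem := by
    rintro _ _ ⟨κ, _, q, V, hq, hV, rfl⟩ ⟨κ', _, q', V', hq', hV', rfl⟩
    refine ⟨κ × κ', inferInstance, fun ω ↦ (q ω, q' ω), fun b ↦ V b.1 ∪ V' b.2, fun b ↦ ?_,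
      fun b ↦ (hV b.1).union (hV' b.2), rfl⟩
    convert h𝒜.inter_mem (hq b.1) (hq' b.2)
    ext ω
    simp [Prod.ext_iff]

theorem generateFrom_gluedSets (h𝒜 : IsSetAlgebra 𝒜) :
    MeasurableSpace.generateFrom (gluedSets m 𝒜) = m ⊔ .generateFrom 𝒜 := by
  refine le_antisymm (MeasurableSpace.generateFrom_le ?_) (sup_le (fun A hA ↦ ?_) ?_)
  · rintro _ ⟨κ, _, q, V, hq, hV, rfl⟩
    rw [glue_eq_iUnion]
    have hcells : MeasurableSpace.generateFrom 𝒜 ≤ m ⊔ .generateFrom 𝒜 := le_sup_right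
    have hpieces : m ≤ m ⊔ .generateFrom 𝒜 := le_sup_left
    exact .iUnion fun b ↦ (hcells _ <| MeasurableSpace.measurableSet_generateFrom (hq b)).inter
      (hpieces _ (hV b))
  · exact MeasurableSpace.measurableSet_generateFrom ⟨Unit, inferInstance, fun _ ↦ (), fun _ ↦ A,
      fun b ↦ by simpa [preimage_const_of_mem] using h𝒜.univ_mem, fun _ ↦ hA, rfl⟩
  · refine MeasurableSpace.generateFrom_mono fun A hA ↦ ?_
    refine ⟨Prop, inferInstance, (· ∈ A), fun p ↦ {_ω | p}, fun p ↦ ?_, fun p ↦ .const p, rfl⟩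
    by_cases hp : p
    · simpa [hp, preimage] using hA
    · simpa [hp, preimage, compl_def] using h𝒜.compl_mem hA

theorem exists_glue_eq_of_mem_gluedSets {J : Type u} [Finite J] (h𝒜 : IsSetAlgebra 𝒜)
    {m : J → MeasurableSpace Ω} {W : J → Set Ω} (hW : ∀ i, W i ∈ gluedSets (m i) 𝒜) :
    ∃ (κ : Type u) (_ : Finite κ) (q : Ω → κ) (V : J → κ → Set Ω), (∀ b, q ⁻¹' {b} ∈ 𝒜) ∧
      (∀ i b, MeasurableSet[m i] (V i b)) ∧ ∀ i, glue q (V i) = W i := by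
  choose κ hκ q V hq hV hqV using hW
  refine ⟨∀ i, κ i, inferInstance, fun ω i ↦ q i ω, fun i b ↦ V i (b i), fun b ↦ ?_,
    fun i b ↦ hV i (b i), hqV⟩
  have := Fintype.ofFinite J
  have hcell : (fun ω i ↦ q i ω) ⁻¹' {b} = ⋂ i ∈ Finset.univ, q i ⁻¹' {b i} := by
    ext ω
    simp [funext_iff]
  exact hcell ▸ h𝒜.biInter_mem Finset.univ fun i _ ↦ hq i (b i)

theorem exists_gluedSets_measureReal_symmDiff_lt {m₀ : MeasurableSpace Ω} {P : Measure Ω}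
    [IsFiniteMeasure P] (hm : m ≤ m₀) (h𝒜 : IsSetAlgebra 𝒜) (h𝒜m : ∀ A ∈ 𝒜, MeasurableSet A)
    {E : Set Ω} (hE : MeasurableSet[m ⊔ .generateFrom 𝒜] E) {η : ℝ} (hη : 0 < η) :
    ∃ W ∈ gluedSets m 𝒜, P.real (E ∆ W) < η := by
  rw [← generateFrom_gluedSets h𝒜] at hE
  refine exists_mem_measureReal_symmDiff_lt (isSetAlgebra_gluedSets h𝒜) ?_ hE hη
  exact (generateFrom_gluedSets h𝒜).trans_le (sup_le hm (MeasurableSpace.generateFrom_le h𝒜m))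

theorem measureReal_sdiff_iInter_le {m₀ : MeasurableSpace Ω} {P : Measure Ω} [IsFiniteMeasure P]
    [Fintype κ] {F : κ → Set Ω} {E : Set Ω} {ε : ℝ} (hF : ∀ b, P.real (E \ F b) ≤ ε) :
    P.real (E \ ⋂ b, F b) ≤ Fintype.card κ * ε := by
  rw [sdiff_iInter]
  refine (measureReal_iUnion_fintype_le _).trans ((Finset.sum_le_sum fun b _ ↦ hF b).trans_eq ?_)
  simp

theorem measureReal_sdiff_glue_le {m₀ : MeasurableSpace Ω} {P : Measure Ω} [IsFiniteMeasure P]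
    [Fintype κ] {q : Ω → κ} {V Q F : κ → Set Ω} {E : Set Ω} {c η ε : ℝ} (hc : 0 ≤ c)
    (hq : ∀ b, MeasurableSet (q ⁻¹' {b})) (hV : ∀ b, MeasurableSet (V b)) (hE : MeasurableSet E)
    (hEV : P.real (E ∆ glue q V) ≤ η)
    (hQ : ∀ b, P.real (q ⁻¹' {b} ∩ (V b \ Q b)) ≤ c * P.real (q ⁻¹' {b} ∩ (V b \ E)))
    (hF : ∀ b, P.real (Q b \ F b) ≤ ε) :
    P.real (E \ glue q F) ≤ (c + 1) * η + Fintype.card κ * ε := by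
  have hVE : ∑ b, P.real (q ⁻¹' {b} ∩ (V b \ E)) = P.real (glue q V \ E) := by
    rw [glue_sdiff_eq_iUnion, measureReal_iUnion_fintype _ fun b ↦ (hq b).inter ((hV b).diff hE)]
    exact fun b b' hb ↦ ((pairwise_disjoint_fiber q hb).mono inter_subset_left inter_subset_left)
  have hcover : E \ glue q F ⊆
      E ∆ glue q V ∪ ⋃ b, (q ⁻¹' {b} ∩ (V b \ Q b) ∪ Q b \ F b) := fun ω ⟨hωE, hωF⟩ ↦ by
    by_cases hωV : ω ∈ glue q V
    · by_cases hωQ : ω ∈ Q (q ω)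
      · exact .inr (mem_iUnion.2 ⟨q ω, .inr ⟨hωQ, hωF⟩⟩)
      · exact .inr (mem_iUnion.2 ⟨q ω, .inl ⟨rfl, hωV, hωQ⟩⟩)
    · exact .inl (.inl ⟨hωE, hωV⟩)
  calc P.real (E \ glue q F)
      ≤ P.real (E ∆ glue q V) + ∑ b, P.real (q ⁻¹' {b} ∩ (V b \ Q b) ∪ Q b \ F b) :=
        (measureReal_mono hcover).trans <| (measureReal_union_le _ _).trans <|
          add_le_add_right (measureReal_iUnion_fintype_le _) _
    _ ≤ P.real (E ∆ glue q V) + ∑ b, (c * P.real (q ⁻¹' {b} ∩ (V b \ E)) + ε) := by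
        gcongr with b
        exact (measureReal_union_le _ _).trans (add_le_add (hQ b) (hF b))
    _ = P.real (E ∆ glue q V) + (c * P.real (glue q V \ E) + Fintype.card κ * ε) := by
        simp [Finset.sum_add_distrib, ← Finset.mul_sum, hVE]
    _ ≤ η + (c * η + Fintype.card κ * ε) := by
        gcongr
        exact (measureReal_mono subset_union_right).trans hEV
    _ = (c + 1) * η + Fintype.card κ * ε := by ring

section Patch

variable {ι J : Type*} [LE ι]

open Classical in
/-- Removals `F b`, one for each cell `b` of the partition given by `q`, are assembled by gluing
them where the algebra of index `e i` contains the cells, and by intersecting them elsewhere. -/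
def patch (q : Ω → κ) (s : ι) (e : J → ι) (F : κ → J → Set Ω) (i : J) : Set Ω :=
  if s ≤ e i then glue q (F · i) else ⋂ b, F b i

variable {q : Ω → κ} {s : ι} {e : J → ι} {F : κ → J → Set Ω}

theorem patch_of_le {i : J} (hi : s ≤ e i) : patch q s e F i = glue q (F · i) := if_pos hi

theorem patch_of_not_le {i : J} (hi : ¬s ≤ e i) : patch q s e F i = ⋂ b, F b i := if_neg hi

theorem iInter_patch_eq_empty (hF : ∀ b, ⋂ i, F b i = ∅) : ⋂ i, patch q s e F i = ∅ := by
  refine iInter_eq_empty_iff.2 fun ω ↦ ?_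
  obtain ⟨i, hi⟩ := iInter_eq_empty_iff.1 (hF (q ω)) ω
  refine ⟨i, ?_⟩
  by_cases hsi : s ≤ e i
  · rwa [patch_of_le hsi]
  · rw [patch_of_not_le hsi]
    exact fun hω ↦ hi (mem_iInter.1 hω _)

end Patch

end Glue

section DenseCore

open Filter
open scoped ProbabilityTheory

variable {Ω : Type*} {m m₀ : MeasurableSpace Ω} {P : Measure Ω}

variable (m P) in
/-- The points at which, from the point of view of the `σ`-algebra `m`, the set `β` is present and
`E` fills it up to the proportion `c`. This `m`-measurable set replaces `E` on `β`. -/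
def denseCore (c : ℝ) (β E : Set Ω) : Set Ω :=
  {ω | 0 < (P⟦β | m⟧) ω ∧ (P⟦β \ E | m⟧) ω ≤ c * (P⟦β | m⟧) ω}

theorem measurableSet_denseCore (c : ℝ) (β E : Set Ω) : MeasurableSet[m] (denseCore m P c β E) :=
  (measurableSet_lt measurable_const (measurable_condProb _)).inter
    (measurableSet_le (measurable_condProb _) ((measurable_condProb _).const_mul c))

theorem measureReal_inter_sdiff_denseCore_le [IsFiniteMeasure P] (hm : m ≤ m₀) {c : ℝ} (hc : 0 < c)
    {β E V : Set Ω} (hβ : MeasurableSet β) (hE : MeasurableSet E) (hV : MeasurableSet[m] V) :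
    P.real (β ∩ (V \ denseCore m P c β E)) ≤ c⁻¹ * P.real (β ∩ (V \ E)) := by
  have hdensity : ∀ᵐ ω ∂P, ω ∈ V \ denseCore m P c β E →
      (P⟦β | m⟧) ω ≤ c⁻¹ * (P⟦β \ E | m⟧) ω := by
    filter_upwards [condProb_nonneg (m := m) (P := P) (β \ E)] with ω hnonneg hω
    rw [← div_eq_inv_mul, le_div_iff₀' hc]
    by_contra! hlt
    exact hω.2 ⟨pos_of_mul_pos_right (hnonneg.trans_lt hlt) hc.le, hlt.le⟩
  calc P.real (β ∩ (V \ denseCore m P c β E))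
      ≤ c⁻¹ * P.real ((β \ E) ∩ (V \ denseCore m P c β E)) :=
        measureReal_inter_le_of_condProb_le hm (hV.diff (measurableSet_denseCore c β E)) hβ
          (hβ.diff hE) hdensity
    _ ≤ c⁻¹ * P.real (β ∩ (V \ E)) := by
        gcongr c⁻¹ * ?_
        exact measureReal_mono fun ω hω ↦ ⟨hω.1.1, hω.2.1, hω.1.2⟩

end DenseCore

section AbstractRemoval

open scoped ProbabilityTheory symmDiff

variable {ι Ω : Type*} [PartialOrder ι] [MeasurableSpace Ω]

/-- A monotone family of algebras of measurable subsets of `Ω` indexed by a poset. In the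
application the index is a set of coordinates and its algebra consists of the internal sets that
depend on these coordinates only. -/
structure SetAlgebraSystem (ι Ω : Type*) [PartialOrder ι] [MeasurableSpace Ω] where
  sets : ι → Set (Set Ω)
  isSetAlgebra : ∀ s, IsSetAlgebra (sets s)
  mono : Monotone sets
  measurableSet : ∀ s, ∀ A ∈ sets s, MeasurableSet A

theorem inf_Iic_le_erase_inf_Iic {ι : Type*} [PartialOrder ι] {S : LowerSet ι} {s t : ι}
    (hst : ¬s ≤ t) : S ⊓ .Iic t ≤ S.erase s ⊓ .Iic t :=
  fun _ hu ↦ ⟨⟨hu.1, fun hsu ↦ hst (hsu.trans hu.2)⟩, hu.2⟩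

namespace SetAlgebraSystem

variable (𝒜 : SetAlgebraSystem ι Ω)

/-- The `σ`-algebra generated by the algebras with index in a lower set. -/
abbrev sigma (S : LowerSet ι) : MeasurableSpace Ω := ⨆ s ∈ S, .generateFrom (𝒜.sets s)

theorem generateFrom_sets_le_sigma {S : LowerSet ι} {s : ι} (hs : s ∈ S) :
    .generateFrom (𝒜.sets s) ≤ 𝒜.sigma S :=
  le_iSup₂_of_le s hs le_rfl

theorem sigma_mono : Monotone 𝒜.sigma := fun _ _ hST ↦ biSup_mono fun _ hs ↦ hST hs

theorem sigma_le (S : LowerSet ι) : 𝒜.sigma S ≤ ‹MeasurableSpace Ω› :=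
  iSup₂_le fun s _ ↦ MeasurableSpace.generateFrom_le (𝒜.measurableSet s)

theorem sigma_bot : 𝒜.sigma ⊥ = ⊥ := by simp [sigma]

theorem sigma_inf_Iic_le_sigma_erase {S : LowerSet ι} {s : ι} (hs : Maximal (· ∈ S) s) (e : ι) :
    𝒜.sigma (S ⊓ .Iic e) ≤ 𝒜.sigma (S.erase s ⊓ .Iic e) ⊔ .generateFrom (𝒜.sets s) := by
  refine iSup₂_le fun t ht ↦ ?_
  by_cases hst : s ≤ t
  · rw [hs.eq_of_le ht.1 hst]
    exact le_sup_right
  · exact le_sup_of_le_left <|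
      𝒜.generateFrom_sets_le_sigma ⟨⟨ht.1, hst⟩, ht.2⟩

/-- Relative independence of the system: an inequality between two sets of index `s` that holds on
`S ⊓ Iic s` also holds on `S`. This is the conditional independence of the index `s` and the lower
set `S` given `S ⊓ Iic s`, expressed without conditional expectations. -/
def IsRelativelyIndependent (P : Measure Ω) : Prop :=
  ∀ (S : LowerSet ι) (s : ι) (D G : Set Ω), MeasurableSet[𝒜.sigma (.Iic s)] D →
    MeasurableSet[𝒜.sigma (.Iic s)] G → ∀ c ≥ 0,
    (∀ R, MeasurableSet[𝒜.sigma (S ⊓ .Iic s)] R → P.real (D ∩ R) ≤ c * P.real (G ∩ R)) →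
    ∀ R, MeasurableSet[𝒜.sigma S] R → P.real (D ∩ R) ≤ c * P.real (G ∩ R)

variable {𝒜} {P : Measure Ω} {J : Type u} {S : LowerSet ι} {s : ι} {e : J → ι} {β : Set Ω}
  {E : J → Set Ω}

/-- Null intersections of sets `E i` over `S` can be made empty inside the algebras themselves, at
an arbitrarily small cost in each `E i`. -/
def HasNullRemoval (𝒜 : SetAlgebraSystem ι Ω) (P : Measure Ω) (e : J → ι) (S : LowerSet ι) : Prop :=
  ∀ E : J → Set Ω, (∀ i, MeasurableSet[𝒜.sigma (S ⊓ .Iic (e i))] (E i)) → P (⋂ i, E i) = 0 →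
    ∀ ε > 0, ∃ F : J → Set Ω, (∀ i, F i ∈ 𝒜.sets (e i)) ∧ (∀ i, P.real (E i \ F i) ≤ ε) ∧
      ⋂ i, F i = ∅

theorem hasNullRemoval_bot [IsProbabilityMeasure P] : 𝒜.HasNullRemoval P e ⊥ := by
  intro E hE hnull ε hε
  have hE' i : E i = ∅ ∨ E i = univ := by
    rw [← MeasurableSpace.measurableSet_bot_iff, ← 𝒜.sigma_bot, ← bot_inf_eq (LowerSet.Iic (e i))]
    exact hE i
  refine ⟨E, fun i ↦ ?_, fun i ↦ by simpa using hε.le, ?_⟩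
  · rcases hE' i with hi | hi
    · exact hi ▸ (𝒜.isSetAlgebra _).empty_mem
    · exact hi ▸ (𝒜.isSetAlgebra _).univ_mem
  · by_contra hne
    have huniv i : E i = univ := (hE' i).resolve_left fun hi ↦ hne (iInter_eq_empty_of_eq_empty hi)
    simp [huniv] at hnull

theorem measurableSet_sigma_Iic_of_mem (hβ : β ∈ 𝒜.sets s) {t : ι} (hst : s ≤ t) :
    MeasurableSet[𝒜.sigma (.Iic t)] β :=
  𝒜.generateFrom_sets_le_sigma (LowerSet.mem_Iic_iff.2 hst) _
    (MeasurableSpace.measurableSet_generateFrom hβ)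

theorem patch_mem_sets {κ : Type*} [Finite κ] {q : Ω → κ} {F : κ → J → Set Ω}
    (hq : ∀ b, q ⁻¹' {b} ∈ 𝒜.sets s) (hF : ∀ b i, F b i ∈ 𝒜.sets (e i)) (i : J) :
    patch q s e F i ∈ 𝒜.sets (e i) := by
  have := Fintype.ofFinite κ
  by_cases hi : s ≤ e i
  · rw [patch_of_le hi]
    exact glue_mem_of_isSetAlgebra (𝒜.isSetAlgebra _) (fun b ↦ 𝒜.mono hi (hq b)) (hF · i)
  · rw [patch_of_not_le hi]
    simpa using (𝒜.isSetAlgebra (e i)).biInter_mem Finset.univ fun b _ ↦ hF b i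

variable [IsFiniteMeasure P]

theorem measureReal_sdiff_inter_le_of_subset_denseCore (h𝒜 : 𝒜.IsRelativelyIndependent P)
    {t : ι} {E R : Set Ω} (hβ : MeasurableSet[𝒜.sigma (.Iic t)] β)
    (hE : MeasurableSet[𝒜.sigma (.Iic t)] E) (hR : MeasurableSet[𝒜.sigma S] R) {c : ℝ}
    (hc : 0 ≤ c) (hRK : R ⊆ denseCore (𝒜.sigma (S ⊓ .Iic t)) P c β E) :
    P.real ((β \ E) ∩ R) ≤ c * P.real (β ∩ R) := by
  have hK := measurableSet_denseCore (m := 𝒜.sigma (S ⊓ .Iic t)) (P := P) c β E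
  have hK' := 𝒜.sigma_mono inf_le_right _ hK
  rw [← inter_eq_right.2 hRK, ← inter_assoc, ← inter_assoc]
  refine h𝒜 S t _ _ ((hβ.diff hE).inter hK') (hβ.inter hK') c hc (fun R' hR' ↦ ?_) R hR
  rw [inter_assoc, inter_assoc]
  exact measureReal_inter_le_of_condProb_le (𝒜.sigma_le _) (hK.inter hR')
    (𝒜.sigma_le _ _ (hβ.diff hE)) (𝒜.sigma_le _ _ hβ) (ae_of_all _ fun ω hω ↦ hω.1.2)

theorem measure_eq_zero_of_subset_condProb_pos (h𝒜 : 𝒜.IsRelativelyIndependent P) {t : ι}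
    {R : Set Ω} (hβ : MeasurableSet[𝒜.sigma (.Iic t)] β) (hR : MeasurableSet[𝒜.sigma S] R)
    (hRpos : R ⊆ {ω | 0 < (P⟦β | 𝒜.sigma (S ⊓ .Iic t)⟧) ω}) (hnull : P (β ∩ R) = 0) : P R = 0 := by
  let K (n : ℕ) : Set Ω := {ω | (n + 1 : ℝ)⁻¹ ≤ (P⟦β | 𝒜.sigma (S ⊓ .Iic t)⟧) ω}
  have hK n : MeasurableSet[𝒜.sigma (S ⊓ .Iic t)] (K n) :=
    measurableSet_le measurable_const (measurable_condProb β)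
  have hK' n := 𝒜.sigma_mono inf_le_right _ (hK n)
  have hcover : R ⊆ ⋃ n, K n ∩ R := fun ω hω ↦ by
    have hpos : 0 < (P⟦β | 𝒜.sigma (S ⊓ .Iic t)⟧) ω := hRpos hω
    obtain ⟨n, hn⟩ := exists_nat_one_div_lt hpos
    exact mem_iUnion.2 ⟨n, by simpa [K] using hn.le, hω⟩
  refine measure_mono_null hcover (measure_iUnion_null fun n ↦ ?_)
  have hdensity R' (hR' : MeasurableSet[𝒜.sigma (S ⊓ .Iic t)] R') :
      P.real (K n ∩ R') ≤ (n + 1) * P.real ((β ∩ K n) ∩ R') := by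
    rw [inter_assoc, ← inv_mul_le_iff₀ (by positivity)]
    exact measureReal_le_of_le_condProb (𝒜.sigma_le _) ((hK n).inter hR') (𝒜.sigma_le _ _ hβ)
      fun ω hω ↦ hω.1
  have hle := h𝒜 S t _ _ (hK' n) (hβ.inter (hK' n)) (n + 1) (by positivity) hdensity R hR
  have hβK : P.real ((β ∩ K n) ∩ R) = 0 := by
    rw [measureReal_eq_zero_iff]
    exact measure_mono_null (inter_subset_inter_left R inter_subset_left) hnull
  rw [hβK, mul_zero] at hle
  exact (measureReal_eq_zero_iff).1 (hle.antisymm measureReal_nonneg)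

section Fintype

variable [Fintype J]

theorem measure_inter_eq_zero_of_subset_denseCore (h𝒜 : 𝒜.IsRelativelyIndependent P)
    (hβ : β ∈ 𝒜.sets s) (hE : ∀ i, MeasurableSet[𝒜.sigma (.Iic (e i))] (E i))
    {R : Set Ω} (hR : MeasurableSet[𝒜.sigma S] R) {c : ℝ} (hc₀ : 0 ≤ c)
    (hc₁ : Fintype.card J * c < 1)
    (hRK : ∀ i, s ≤ e i → R ⊆ denseCore (𝒜.sigma (S ⊓ .Iic (e i))) P c β (E i))
    (hRE : ∀ i, ¬s ≤ e i → R ⊆ E i) (hnull : P (⋂ i, E i) = 0) : P (β ∩ R) = 0 := by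
  have hloss : ∀ i, P.real ((β \ E i) ∩ R) ≤ c * P.real (β ∩ R) := fun i ↦ by
    by_cases hi : s ≤ e i
    · exact measureReal_sdiff_inter_le_of_subset_denseCore h𝒜 (measurableSet_sigma_Iic_of_mem hβ hi)
        (hE i) hR hc₀ (hRK i hi)
    · have hempty : (β \ E i) ∩ R = ∅ :=
        disjoint_iff_inter_eq_empty.1 (disjoint_sdiff_left.mono_right (hRE i hi))
      rw [hempty, measureReal_empty]
      positivity
  have hcover : β ∩ R ⊆ (⋂ i, E i) ∪ ⋃ i, (β \ E i) ∩ R := fun ω hω ↦ by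
    by_cases hωE : ∀ i, ω ∈ E i
    · exact .inl (mem_iInter.2 hωE)
    · push Not at hωE
      exact .inr (mem_iUnion.2 (hωE.imp fun i hi ↦ ⟨⟨hω.1, hi⟩, hω.2⟩))
  have hle : P.real (β ∩ R) ≤ Fintype.card J * c * P.real (β ∩ R) :=
    calc P.real (β ∩ R) ≤ P.real (⋂ i, E i) + ∑ i, P.real ((β \ E i) ∩ R) :=
        (measureReal_mono hcover).trans <| (measureReal_union_le _ _).trans <|
          add_le_add_right (measureReal_iUnion_fintype_le _) _
      _ ≤ 0 + ∑ _i : J, c * P.real (β ∩ R) := by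
        gcongr with i
        · rw [measureReal_def, hnull, ENNReal.toReal_zero]
        · exact hloss i
      _ = Fintype.card J * c * P.real (β ∩ R) := by simp [mul_assoc]
  rw [← measureReal_eq_zero_iff]
  nlinarith [measureReal_nonneg (μ := P) (s := β ∩ R)]

theorem measure_eq_zero_of_subset_denseCore (h𝒜 : 𝒜.IsRelativelyIndependent P)
    (hβ : β ∈ 𝒜.sets s) (hE : ∀ i, MeasurableSet[𝒜.sigma (.Iic (e i))] (E i)) (hs : ∃ i, s ≤ e i)
    {R : Set Ω} (hR : MeasurableSet[𝒜.sigma S] R) {c : ℝ} (hc₀ : 0 ≤ c)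
    (hc₁ : Fintype.card J * c < 1)
    (hRK : ∀ i, s ≤ e i → R ⊆ denseCore (𝒜.sigma (S ⊓ .Iic (e i))) P c β (E i))
    (hRE : ∀ i, ¬s ≤ e i → R ⊆ E i) (hnull : P (⋂ i, E i) = 0) : P R = 0 := by
  obtain ⟨i, hi⟩ := hs
  have hβR := measure_inter_eq_zero_of_subset_denseCore h𝒜 hβ hE hR hc₀ hc₁ hRK hRE hnull
  exact measure_eq_zero_of_subset_condProb_pos h𝒜 (measurableSet_sigma_Iic_of_mem hβ hi) hR
    (fun ω hω ↦ (hRK i hi hω).1) hβR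

open Classical in
theorem exists_null_refinement (h𝒜 : 𝒜.IsRelativelyIndependent P) (hβ : β ∈ 𝒜.sets s)
    (hE : ∀ i, MeasurableSet[𝒜.sigma (.Iic (e i))] (E i))
    (hES : ∀ i, ¬s ≤ e i → MeasurableSet[𝒜.sigma (S ⊓ .Iic (e i))] (E i))
    (hs : ∃ i, s ≤ e i) (hnull : P (⋂ i, E i) = 0) :
    ∃ Q : J → Set Ω, (∀ i, MeasurableSet[𝒜.sigma (S ⊓ .Iic (e i))] (Q i)) ∧ P (⋂ i, Q i) = 0 ∧
      (∀ i, ¬s ≤ e i → Q i = E i) ∧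
      ∀ i, s ≤ e i → ∀ V, MeasurableSet[𝒜.sigma (S ⊓ .Iic (e i))] V →
        P.real (β ∩ (V \ Q i)) ≤ (Fintype.card J + 1) * P.real (β ∩ (V \ E i)) := by
  let c : ℝ := (Fintype.card J + 1 : ℝ)⁻¹
  have hc₀ : 0 < c := by positivity
  have hc₁ : Fintype.card J * c < 1 := by
    rw [← div_eq_mul_inv, div_lt_one (by positivity)]
    exact lt_add_one _
  let Q i := if s ≤ e i then denseCore (𝒜.sigma (S ⊓ .Iic (e i))) P c β (E i) else E i
  have hQ_pos {i} (hi : s ≤ e i) : Q i = denseCore (𝒜.sigma (S ⊓ .Iic (e i))) P c β (E i) :=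
    if_pos hi
  have hQ_neg {i} (hi : ¬s ≤ e i) : Q i = E i := if_neg hi
  have hQ i : MeasurableSet[𝒜.sigma (S ⊓ .Iic (e i))] (Q i) := by
    by_cases hi : s ≤ e i
    · exact hQ_pos hi ▸ measurableSet_denseCore c β (E i)
    · exact hQ_neg hi ▸ hES i hi
  refine ⟨Q, hQ, ?_, fun i hi ↦ hQ_neg hi, fun i hi V hV ↦ ?_⟩
  · exact measure_eq_zero_of_subset_denseCore h𝒜 hβ hE hs
      (.iInter fun i ↦ 𝒜.sigma_mono inf_le_left _ (hQ i)) hc₀.le hc₁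
      (fun i hi ↦ hQ_pos hi ▸ iInter_subset Q i) (fun i hi ↦ hQ_neg hi ▸ iInter_subset Q i) hnull
  · have h := measureReal_inter_sdiff_denseCore_le (P := P) (𝒜.sigma_le _) hc₀
      (𝒜.measurableSet s β hβ) (𝒜.sigma_le _ _ (hE i)) hV
    rwa [inv_inv, ← hQ_pos hi] at h

end Fintype

variable [Finite J]

theorem exists_glue_measureReal_symmDiff_le (hs : Maximal (· ∈ S) s)
    (hE : ∀ i, MeasurableSet[𝒜.sigma (S ⊓ .Iic (e i))] (E i)) {η : ℝ} (hη : 0 < η) :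
    ∃ (κ : Type u) (_ : Fintype κ) (q : Ω → κ) (V : J → κ → Set Ω),
      (∀ b, q ⁻¹' {b} ∈ 𝒜.sets s) ∧
      (∀ i b, MeasurableSet[𝒜.sigma (S.erase s ⊓ .Iic (e i))] (V i b)) ∧
      ∀ i, P.real (E i ∆ glue q (V i)) ≤ η := by
  choose W hW hEW using fun i ↦ exists_gluedSets_measureReal_symmDiff_lt (P := P)
    (𝒜.sigma_le _) (𝒜.isSetAlgebra s) (𝒜.measurableSet s)
    (𝒜.sigma_inf_Iic_le_sigma_erase hs (e i) _ (hE i)) hη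
  obtain ⟨κ, _, q, V, hq, hV, hVW⟩ := exists_glue_eq_of_mem_gluedSets (𝒜.isSetAlgebra s) hW
  exact ⟨κ, .ofFinite κ, q, V, hq, hV, fun i ↦ hVW i ▸ (hEW i).le⟩

theorem HasNullRemoval.of_erase (h𝒜 : 𝒜.IsRelativelyIndependent P) (hs : Maximal (· ∈ S) s)
    (ih : 𝒜.HasNullRemoval P e (S.erase s)) : 𝒜.HasNullRemoval P e S := by
  intro E hE hnull ε hε
  have hE_erase i (hi : ¬s ≤ e i) : MeasurableSet[𝒜.sigma (S.erase s ⊓ .Iic (e i))] (E i) :=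
    𝒜.sigma_mono (inf_Iic_le_erase_inf_Iic hi) _ (hE i)
  have := Fintype.ofFinite J
  by_cases hse : ∃ i, s ≤ e i
  swap
  · exact ih E (fun i ↦ hE_erase i (not_exists.1 hse i)) hnull ε hε
  let M : ℝ := Fintype.card J + 1
  have hM : 0 < M + 1 := by positivity
  obtain ⟨κ, _, q, V, hq, hV, hEV⟩ := exists_glue_measureReal_symmDiff_le (P := P) hs hE
    (η := ε / 2 / (M + 1)) (by positivity)
  choose Q hQ hQnull hQ_neg hQ_pos using fun b ↦ exists_null_refinement h𝒜 (hq b)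
    (fun i ↦ 𝒜.sigma_mono inf_le_right _ (hE i)) hE_erase hse hnull
  let ε' := ε / 2 / (Fintype.card κ + 1)
  have hκε' : Fintype.card κ * ε' ≤ ε / 2 := by
    rw [mul_div_left_comm]
    exact mul_le_of_le_one_right (by positivity) ((div_le_one (by positivity)).2 (by simp))
  choose F hF hQF hFempty using fun b ↦ ih (Q b) (hQ b) (hQnull b) ε' (by positivity)
  refine ⟨patch q s e F, patch_mem_sets hq hF, fun i ↦ ?_, iInter_patch_eq_empty hFempty⟩
  by_cases hi : s ≤ e i
  · calc P.real (E i \ patch q s e F i)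
        ≤ (M + 1) * (ε / 2 / (M + 1)) + Fintype.card κ * ε' := by
          rw [patch_of_le hi]
          exact measureReal_sdiff_glue_le (by positivity) (fun b ↦ 𝒜.measurableSet s _ (hq b))
            (fun b ↦ 𝒜.sigma_le _ _ (hV i b)) (𝒜.sigma_le _ _ (hE i)) (hEV i)
            (fun b ↦ hQ_pos b i hi _ (hV i b)) (hQF · i)
      _ ≤ ε := by
          rw [mul_div_cancel₀ _ hM.ne']
          linarith
  · rw [patch_of_not_le hi]
    linarith [measureReal_sdiff_iInter_le (P := P) fun b ↦ hQ_neg b i hi ▸ hQF b i]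

theorem hasNullRemoval [Finite ι] [IsProbabilityMeasure P] (h𝒜 : 𝒜.IsRelativelyIndependent P)
    (e : J → ι) (S : LowerSet ι) : 𝒜.HasNullRemoval P e S := by
  have : Finite (LowerSet ι) := .of_injective _ SetLike.coe_injective
  induction S using WellFoundedLT.induction with
  | ind S ih =>
    rcases eq_or_ne S ⊥ with rfl | hS
    · exact hasNullRemoval_bot
    · obtain ⟨s, hs⟩ := (S : Set ι).toFinite.exists_maximal (LowerSet.coe_nonempty.2 hS)
      exact (ih _ (LowerSet.erase_lt.2 hs.prop)).of_erase h𝒜 hs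

theorem exists_removal_of_measure_iInter_eq_zero [Finite ι] [IsProbabilityMeasure P]
    (h𝒜 : 𝒜.IsRelativelyIndependent P) (hE : ∀ i, E i ∈ 𝒜.sets (e i)) (hnull : P (⋂ i, E i) = 0)
    {ε : ℝ} (hε : 0 < ε) :
    ∃ F : J → Set Ω, (∀ i, F i ∈ 𝒜.sets (e i)) ∧ (∀ i, P.real (E i \ F i) ≤ ε) ∧ ⋂ i, F i = ∅ :=
  hasNullRemoval h𝒜 e ⊤ E
    (fun i ↦ (top_inf_eq (LowerSet.Iic (e i))).symm ▸ measurableSet_sigma_Iic_of_mem (hE i) le_rfl)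
    hnull ε hε

end SetAlgebraSystem

end AbstractRemoval

section Product

variable {α β : Type*} [MeasurableSpace α] [MeasurableSpace β] {μ : Measure α} {ν : Measure β}
  [IsFiniteMeasure ν] {T : Set (α × β)}

theorem measureReal_prod_eq_integral (hT : MeasurableSet T) :
    (μ.prod ν).real T = ∫ a, ν.real (Prod.mk a ⁻¹' T) ∂μ := by
  rw [measureReal_def, Measure.prod_apply hT]
  exact (integral_toReal (measurable_measure_prodMk_left hT).aemeasurable
    (ae_of_all _ fun _ ↦ measure_lt_top _ _)).symm

theorem mul_measureReal_setOf_le_le_measureReal_prod [IsFiniteMeasure μ] (hT : MeasurableSet T)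
    (c : ℝ) : c * μ.real {a | c ≤ ν.real (Prod.mk a ⁻¹' T)} ≤ (μ.prod ν).real T := by
  rw [measureReal_prod_eq_integral hT]
  exact mul_meas_ge_le_integral_of_nonneg (ae_of_all _ fun _ ↦ measureReal_nonneg)
    (Measure.integrable_measure_prodMk_left hT (measure_ne_top _ _)) c

end Product

section Piecewise

open Filtration

variable {J : Type*} {X : J → Type*} [∀ j, MeasurableSpace (X j)] {s : Finset J}
  {D G R : Set (∀ j, X j)}

theorem mem_iff_mem_of_forall_mem_eq (hD : MeasurableSet[piFinset s] D) {x y : ∀ j, X j}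
    (hxy : ∀ j ∈ s, x j = y j) : x ∈ D ↔ y ∈ D := by
  obtain ⟨D, -, rfl⟩ := hD
  have hrestrict : s.restrict x = s.restrict y := funext fun j ↦ hxy j j.2
  simp only [mem_preimage, hrestrict]

variable [DecidableEq J]

theorem preimage_piecewise_inter_eq (hD : MeasurableSet[piFinset s] D) (y : ∀ j, X j) :
    Prod.mk y ⁻¹' ((fun p : (∀ j, X j) × (∀ j, X j) ↦ s.piecewise p.2 p.1) ⁻¹' (D ∩ R)) =
      D ∩ (s.piecewise · y) ⁻¹' R := by
  ext x
  exact and_congr_left' <|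
    mem_iff_mem_of_forall_mem_eq hD fun _ ↦ s.piecewise_eq_of_mem x y

theorem measurable_piecewise_left (s t : Finset J) (y : ∀ j, X j) :
    Measurable[piFinset (t ∩ s), piFinset (X := X) t] (s.piecewise · y) := by
  refine measurable_comap_iff.2 (@measurable_pi_iff _ _ _ (_) _ _ |>.2 fun j ↦ ?_)
  by_cases hj : (j : J) ∈ s
  · have hj' : (j : J) ∈ t ∩ s := Finset.mem_inter.2 ⟨j.2, hj⟩
    simpa [hj] using! (measurable_pi_apply (X := fun i : (t ∩ s : Finset J) ↦ X i) ⟨j, hj'⟩).comp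
      (comap_measurable _)
  · simp [hj]

variable [Fintype J] (μ : ∀ j, Measure (X j)) [∀ j, IsProbabilityMeasure (μ j)]

theorem measurePreserving_piecewise (s : Finset J) :
    MeasurePreserving (fun p : (∀ j, X j) × (∀ j, X j) ↦ s.piecewise p.2 p.1)
      ((Measure.pi μ).prod (.pi μ)) (.pi μ) := by
  have hmeas : Measurable fun p : (∀ j, X j) × (∀ j, X j) ↦ s.piecewise p.2 p.1 := by
    refine measurable_pi_iff.2 fun j ↦ ?_
    by_cases hj : j ∈ s <;> simp only [Finset.piecewise, hj, if_true, if_false] <;> fun_prop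
  refine ⟨hmeas, (Measure.pi_eq fun A hA ↦ ?_).symm⟩
  have hpreimage : (fun p : (∀ j, X j) × (∀ j, X j) ↦ s.piecewise p.2 p.1) ⁻¹' univ.pi A =
      (univ.pi fun j ↦ if j ∈ s then univ else A j) ×ˢ
        (univ.pi fun j ↦ if j ∈ s then A j else univ) := by
    ext p
    simp only [mem_preimage, mem_prod, mem_univ_pi, ← forall_and]
    refine forall_congr' fun j ↦ ?_
    by_cases hj : j ∈ s <;> simp [hj]
  rw [Measure.map_apply hmeas (.univ_pi hA), hpreimage, Measure.prod_prod, Measure.pi_pi,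
    Measure.pi_pi, ← Finset.prod_mul_distrib]
  refine Finset.prod_congr rfl fun j _ ↦ ?_
  by_cases hj : j ∈ s <;> simp [hj]

variable {μ}

theorem integrable_measureReal_inter_piecewise (hD : MeasurableSet[piFinset s] D)
    (hR : MeasurableSet R) :
    Integrable (fun y ↦ (Measure.pi μ).real (D ∩ (s.piecewise · y) ⁻¹' R)) (.pi μ) := by
  simpa only [preimage_piecewise_inter_eq hD] using
    Measure.integrable_measure_prodMk_left ((measurePreserving_piecewise μ s).measurable
      ((piFinset.le s _ hD).inter hR)) (measure_ne_top _ _)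

theorem integral_measureReal_inter_piecewise (hD : MeasurableSet[piFinset s] D)
    (hR : MeasurableSet R) :
    ∫ y, (Measure.pi μ).real (D ∩ (s.piecewise · y) ⁻¹' R) ∂.pi μ =
      (Measure.pi μ).real (D ∩ R) := by
  have hDR := (piFinset.le s _ hD).inter hR
  have hpiecewise := measurePreserving_piecewise μ s
  simp only [← preimage_piecewise_inter_eq hD]
  rw [← hpiecewise.measureReal_preimage hDR.nullMeasurableSet,
    measureReal_prod_eq_integral (hpiecewise.measurable hDR)]

theorem exists_piecewise_measureReal_sub_le (hD : MeasurableSet[piFinset s] D)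
    (hG : MeasurableSet[piFinset s] G) (hR : MeasurableSet R) (c : ℝ) :
    ∃ y, (Measure.pi μ).real (D ∩ R) - c * (Measure.pi μ).real (G ∩ R) ≤
      (Measure.pi μ).real (D ∩ (s.piecewise · y) ⁻¹' R) -
        c * (Measure.pi μ).real (G ∩ (s.piecewise · y) ⁻¹' R) := by
  have hDint := integrable_measureReal_inter_piecewise (μ := μ) hD hR
  have hGint := (integrable_measureReal_inter_piecewise (μ := μ) hG hR).const_mul c
  obtain ⟨y, hy⟩ := exists_integral_le (hDint.sub hGint)
  refine ⟨y, ?_⟩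
  simpa only [Pi.sub_apply, integral_sub hDint hGint, integral_const_mul,
    integral_measureReal_inter_piecewise hD hR, integral_measureReal_inter_piecewise hG hR] using hy

end Piecewise

section LoebProduct

open Filter Filtration LoebSpace
open scoped symmDiff Topology

variable {J : Type*} {X : ℕ → J → Type*} [∀ n j, MeasurableSpace (X n j)]

/-- The set algebra system on a Loeb product space indexed by the finite sets of coordinates: the
algebra of index `s` consists of the internal sets that depend only on the coordinates in `s`. -/
def coordinateSystem (X : ℕ → J → Type*) [∀ n j, MeasurableSpace (X n j)] :
    SetAlgebraSystem (Finset J) (LoebSpace fun n ↦ ∀ j, X n j) where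
  sets s := internalSets fun _ ↦ piFinset s
  isSetAlgebra _ := isSetAlgebra_internalSets _
  mono := by
    rintro s t hst _ ⟨A, hA, rfl⟩
    exact ⟨A, fun n ↦ piFinset.mono hst _ (hA n), rfl⟩
  measurableSet := by
    rintro s _ ⟨A, hA, rfl⟩
    exact measurableSet_internal fun n ↦ piFinset.le s _ (hA n)

theorem coordinateSystem_sigma_Iic (s : Finset J) :
    (coordinateSystem X).sigma (.Iic s) = .generateFrom ((coordinateSystem X).sets s) :=
  le_antisymm
    (iSup₂_le fun _ ht ↦ MeasurableSpace.generateFrom_mono ((coordinateSystem X).mono ht))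
    ((coordinateSystem X).generateFrom_sets_le_sigma (LowerSet.mem_Iic_iff.2 le_rfl))

section Sectionable

variable [DecidableEq J]

/-- The internal sets all of whose internal sections, obtained by fixing the coordinates outside
`s`, are measurable over `S ⊓ Iic s`. -/
def sectionableSets (X : ℕ → J → Type*) [∀ n j, MeasurableSpace (X n j)]
    (S : LowerSet (Finset J)) (s : Finset J) : Set (Set (LoebSpace fun n ↦ ∀ j, X n j)) :=
  {A | ∃ R : ∀ n, Set (∀ j, X n j), (∀ n, MeasurableSet (R n)) ∧
    (∀ y : ∀ n j, X n j, MeasurableSet[(coordinateSystem X).sigma (S ⊓ .Iic s)]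
      (internal fun n ↦ (s.piecewise · (y n)) ⁻¹' R n)) ∧ internal R = A}

variable {S : LowerSet (Finset J)} {s : Finset J}

theorem isSetAlgebra_sectionableSets : IsSetAlgebra (sectionableSets X S s) where
  empty_mem := ⟨fun _ ↦ ∅, fun _ ↦ .empty,
    fun _ ↦ by simp only [preimage_empty, internal_empty, MeasurableSet.empty], internal_empty⟩
  compl_mem := by
    rintro _ ⟨R, hR, hsec, rfl⟩
    refine ⟨fun n ↦ (R n)ᶜ, fun n ↦ (hR n).compl, fun y ↦ ?_, internal_compl R⟩
    simpa only [preimage_compl, internal_compl] using (hsec y).compl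
  union_mem := by
    rintro _ _ ⟨R, hR, hsec, rfl⟩ ⟨R', hR', hsec', rfl⟩
    refine ⟨fun n ↦ R n ∪ R' n, fun n ↦ (hR n).union (hR' n), fun y ↦ ?_, internal_union R R'⟩
    simpa only [preimage_union, internal_union] using (hsec y).union (hsec' y)

theorem sets_subset_sectionableSets {t : Finset J} (ht : t ∈ S) :
    (coordinateSystem X).sets t ⊆ sectionableSets X S s := by
  rintro _ ⟨R, hR, rfl⟩
  refine ⟨R, fun n ↦ piFinset.le t _ (hR n), fun y ↦ ?_, rfl⟩
  have hts : t ∩ s ∈ S ⊓ .Iic s := ⟨S.lower Finset.inter_subset_left ht, Finset.inter_subset_right⟩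
  exact (coordinateSystem X).generateFrom_sets_le_sigma hts _ <|
    MeasurableSpace.measurableSet_generateFrom
      ⟨_, fun n ↦ measurable_piecewise_left s t (y n) (hR n), rfl⟩

theorem sigma_le_generateFrom_sectionableSets :
    (coordinateSystem X).sigma S ≤ .generateFrom (sectionableSets X S s) :=
  iSup₂_le fun _ ht ↦ MeasurableSpace.generateFrom_mono (sets_subset_sectionableSets ht)

theorem generateFrom_sectionableSets_le :
    .generateFrom (sectionableSets X S s) ≤
      (inferInstance : MeasurableSpace (LoebSpace fun n ↦ ∀ j, X n j)) := by
  refine MeasurableSpace.generateFrom_le ?_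
  rintro _ ⟨R, hR, -, rfl⟩
  exact measurableSet_internal hR

variable [Fintype J] [∀ n j, Nonempty (X n j)] {μ : ∀ n j, Measure (X n j)}
  [∀ n j, IsProbabilityMeasure (μ n j)]

theorem measureReal_inter_sectionable_le {D G : Set (LoebSpace fun n ↦ ∀ j, X n j)}
    (hD : D ∈ (coordinateSystem X).sets s) (hG : G ∈ (coordinateSystem X).sets s) {c b : ℝ}
    (h : ∀ R, MeasurableSet[(coordinateSystem X).sigma (S ⊓ .Iic s)] R →
      (loebMeasure fun n ↦ .pi (μ n)).real (D ∩ R) -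
        c * (loebMeasure fun n ↦ .pi (μ n)).real (G ∩ R) ≤ b)
    {R : Set (LoebSpace fun n ↦ ∀ j, X n j)} (hR : R ∈ sectionableSets X S s) :
    (loebMeasure fun n ↦ .pi (μ n)).real (D ∩ R) -
      c * (loebMeasure fun n ↦ .pi (μ n)).real (G ∩ R) ≤ b := by
  obtain ⟨D, hD, rfl⟩ := hD
  obtain ⟨G, hG, rfl⟩ := hG
  obtain ⟨R, hR, hsec, rfl⟩ := hR
  choose y hy using fun n ↦ exists_piecewise_measureReal_sub_le (μ := μ n) (hD n) (hG n) (hR n) c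
  refine le_trans ?_ (h _ (hsec y))
  have hlim (A : ∀ n, Set (∀ j, X n j)) (hA : ∀ n, MeasurableSet[piFinset s] (A n))
      (T : ∀ n, Set (∀ j, X n j)) (hT : ∀ n, MeasurableSet (T n)) :
      Tendsto (fun n ↦ (Measure.pi (μ n)).real (A n ∩ T n)) (hyperfilter ℕ)
        (𝓝 ((loebMeasure fun n ↦ .pi (μ n)).real (internal A ∩ internal T))) := by
    rw [← internal_inter]
    exact tendsto_loebMeasure_real_internal _ fun n ↦ (piFinset.le s _ (hA n)).inter (hT n)
  have hsecm n : MeasurableSet ((s.piecewise · (y n)) ⁻¹' R n) :=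
    measurable_prodMk_left ((measurePreserving_piecewise (μ n) s).measurable (hR n))
  exact le_of_tendsto_of_tendsto
    ((hlim D hD R hR).sub ((hlim G hG R hR).const_mul c))
    ((hlim D hD _ hsecm).sub ((hlim G hG _ hsecm).const_mul c)) (.of_forall hy)

end Sectionable

theorem isRelativelyIndependent_coordinateSystem [Fintype J] [∀ n j, Nonempty (X n j)]
    {μ : ∀ n j, Measure (X n j)} [∀ n j, IsProbabilityMeasure (μ n j)] :
    (coordinateSystem X).IsRelativelyIndependent (loebMeasure fun n ↦ .pi (μ n)) := by
  classical
  intro S s D G hD hG c hc h R hR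
  set P := loebMeasure fun n ↦ Measure.pi (μ n)
  refine le_of_forall_pos_le_add fun ε hε ↦ ?_
  let η := ε / (3 * (1 + c))
  have hη : 0 < η := by positivity
  have happrox {E} (hE : MeasurableSet[(coordinateSystem X).sigma (.Iic s)] E) :
      ∃ W ∈ (coordinateSystem X).sets s, P.real (E ∆ W) < η := by
    rw [coordinateSystem_sigma_Iic] at hE
    exact exists_mem_measureReal_symmDiff_lt ((coordinateSystem X).isSetAlgebra s)
      (MeasurableSpace.generateFrom_le ((coordinateSystem X).measurableSet s)) hE hη
  obtain ⟨D', hD', hDD'⟩ := happrox hD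
  obtain ⟨G', hG', hGG'⟩ := happrox hG
  obtain ⟨R', hR', hRR'⟩ := exists_mem_measureReal_symmDiff_lt (P := P)
    (isSetAlgebra_sectionableSets (s := s)) generateFrom_sectionableSets_le
    (sigma_le_generateFrom_sectionableSets R hR) hη
  have hm {T} {E} (hE : MeasurableSet[(coordinateSystem X).sigma T] E) : MeasurableSet E :=
    (coordinateSystem X).sigma_le T E hE
  have hm' {E} (hE : E ∈ (coordinateSystem X).sets s) : MeasurableSet E :=
    (coordinateSystem X).measurableSet s E hE
  have hR'm : MeasurableSet R' :=
    generateFrom_sectionableSets_le _ (MeasurableSpace.measurableSet_generateFrom hR')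
  have hb : P.real (D' ∩ R') - c * P.real (G' ∩ R') ≤ 0 + (1 + c) * (η + 0) :=
    measureReal_inter_sectionable_le hD' hG' (fun T hT ↦
      (measureReal_inter_sub_const_mul_le (P := P) (hm' hD') (hm' hG') (hm hT) (hm hD) (hm hG)
        (hm hT) hc (by rw [symmDiff_comm]; exact hDD'.le) (by rw [symmDiff_comm]; exact hGG'.le)
        (by simp)).trans (add_le_add_left (sub_nonpos.2 (h T hT)) _)) hR'
  have hRb := measureReal_inter_sub_const_mul_le (P := P) (hm hD) (hm hG) (hm hR) (hm' hD')
    (hm' hG') hR'm hc hDD'.le hGG'.le hRR'.le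
  have hηε : (1 + c) * η = ε / 3 := by
    simp only [η]
    field_simp
  linarith

end LoebProduct

section SimplexRemoval

open Filter Filtration LoebSpace SetAlgebraSystem
open scoped Topology

universe v

theorem exists_simplex_removal (J : Type u) [Fintype J] [DecidableEq J] {ε : ℝ} (hε : 0 < ε) :
    ∃ δ > 0, ∀ (X : J → Type v) [∀ j, MeasurableSpace (X j)] (μ : ∀ j, Measure (X j))
      [∀ j, IsProbabilityMeasure (μ j)] (H : J → Set (∀ j, X j)),
      (∀ i, MeasurableSet[piFinset {i}ᶜ] (H i)) → (Measure.pi μ).real (⋂ i, H i) ≤ δ →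
      ∃ F : J → Set (∀ j, X j), (∀ i, MeasurableSet[piFinset {i}ᶜ] (F i)) ∧
        (∀ i, (Measure.pi μ).real (H i \ F i) ≤ ε) ∧ ⋂ i, F i = ∅ := by
  by_contra! hcounter
  choose X mX μ hμ H hH hHδ hF using fun n : ℕ ↦ hcounter (1 / (n + 1)) (by positivity)
  have hX n j : Nonempty (X n j) := (μ n j).nonempty_of_neZero
  set P := loebMeasure fun n ↦ Measure.pi (μ n)
  have hm {n} {i : J} {A : Set (∀ j, X n j)} (hA : MeasurableSet[piFinset {i}ᶜ] A) :
      MeasurableSet A := piFinset.le _ _ hA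
  have hnull : P (⋂ i, internal fun n ↦ H n i) = 0 := by
    rw [← measureReal_eq_zero_iff, ← internal_iInter]
    refine tendsto_nhds_unique
      (tendsto_loebMeasure_real_internal _ fun n ↦ .iInter fun i ↦ hm (hH n i)) ?_
    exact squeeze_zero (fun n ↦ measureReal_nonneg) hHδ
      (tendsto_one_div_add_atTop_nhds_zero_nat.mono_left Nat.hyperfilter_le_atTop)
  obtain ⟨F, hFsets, hFε, hFempty⟩ :=
    exists_removal_of_measure_iInter_eq_zero
      (isRelativelyIndependent_coordinateSystem (μ := μ)) (e := fun i : J ↦ ({i}ᶜ : Finset J))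
      (fun i ↦ ⟨_, (hH · i), rfl⟩) hnull (half_pos hε)
  choose F hFm hFF using hFsets
  obtain rfl := funext hFF
  have hempty : ∀ᶠ n in hyperfilter ℕ, ⋂ i, F i n = ∅ := by
    rwa [← internal_eq_empty_iff, internal_iInter]
  have hsmall : ∀ᶠ n in hyperfilter ℕ, ∀ i, (Measure.pi (μ n)).real (H n i \ F i n) ≤ ε := by
    refine eventually_all.2 fun i ↦ ?_
    have hlt := (hFε i).trans_lt (half_lt_self hε)
    rw [sdiff_eq, ← internal_compl, ← internal_inter] at hlt
    exact ((tendsto_loebMeasure_real_internal _ fun n ↦ (hm (hH n i)).inter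
      (hm (hFm i n)).compl).eventually_lt_const hlt).mono fun n hn ↦ hn.le
  obtain ⟨n, hnε, hn⟩ := (hsmall.and hempty).exists
  exact (hF n (F · n) (hFm · n) hnε).ne_empty hn

end SimplexRemoval

section SubgroupRemoval

universe v

open Filtration
open scoped Pointwise

theorem exists_isAddHaarMeasure_isProbabilityMeasure (G : Type*) [AddGroup G] [TopologicalSpace G]
    [IsTopologicalAddGroup G] [CompactSpace G] [MeasurableSpace G] [BorelSpace G] :
    ∃ μ : Measure G, μ.IsAddHaarMeasure ∧ IsProbabilityMeasure μ :=
  ⟨Measure.addHaarMeasure ⊤, inferInstance,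
    ⟨by simpa using Measure.addHaarMeasure_self (K₀ := (⊤ : TopologicalSpace.PositiveCompacts G))⟩⟩

theorem exists_forall_notMem_of_measureReal_le {Ω J : Type*} [MeasurableSpace Ω] [Fintype J]
    {P : Measure Ω} [IsProbabilityMeasure P] {T : J → Set Ω} {c : ℝ}
    (hT : ∀ i, P.real (T i) ≤ c) (hc : Fintype.card J * c < 1) : ∃ ω, ∀ i, ω ∉ T i := by
  have hlt : P.real (⋃ i, T i) < 1 := by
    refine (measureReal_iUnion_fintype_le T).trans_lt ?_
    refine (Finset.sum_le_card_nsmul _ _ c fun i _ ↦ hT i).trans_lt ?_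
    rwa [nsmul_eq_mul]
  obtain ⟨ω, hω⟩ := (ne_univ_iff_exists_notMem (⋃ i, T i)).1 fun huniv ↦ by simp [huniv] at hlt
  exact ⟨ω, by simpa using hω⟩

instance {G : Type*} [AddGroup G] [TopologicalSpace G] [SecondCountableTopology G]
    (K : AddSubgroup G) : SecondCountableTopology K :=
  TopologicalSpace.Subtype.secondCountableTopology (K : Set G)

variable {J : Type*} [Fintype J] {G : Type*} [AddCommGroup G] (K : J → AddSubgroup G)

/-- The summation homomorphism from the product of the subgroups `K j`. -/
def sumHom : (∀ j, K j) →+ G := ∑ j, (K j).subtype.comp (Pi.evalAddMonoidHom (fun j ↦ K j) j)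

theorem sumHom_apply (x : ∀ j, K j) : sumHom K x = ∑ j, (x j : G) := by
  simp [sumHom, AddMonoidHom.finsetSum_apply]

theorem continuous_sumHom [TopologicalSpace G] [IsTopologicalAddGroup G] :
    Continuous (sumHom K) := by
  simp only [funext (sumHom_apply K)]
  fun_prop

variable {K}

theorem measurePreserving_sumHom [TopologicalSpace G] [IsTopologicalAddGroup G] [CompactSpace G]
    [SecondCountableTopology G] [MeasurableSpace G] [BorelSpace G] [∀ j, CompactSpace (K j)]
    (ν : ∀ j, Measure (K j)) [∀ j, (ν j).IsAddHaarMeasure] [∀ j, IsProbabilityMeasure (ν j)]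
    {μ : Measure G} [μ.IsAddHaarMeasure] [IsProbabilityMeasure μ]
    (hsurj : Function.Surjective (sumHom K)) : MeasurePreserving (sumHom K) (.pi ν) μ :=
  AddMonoidHom.measurePreserving (continuous_sumHom K) hsurj (by simp)

variable [DecidableEq J]

theorem sumHom_single (i : J) (k : K i) : sumHom K (Pi.single i k) = k := by
  rw [sumHom_apply, Finset.sum_eq_single_of_mem i (Finset.mem_univ i), Pi.single_eq_same]
  intro j _ hj
  rw [Pi.single_eq_of_ne hj, ZeroMemClass.coe_zero]

variable {i₀ : J} (hi₀ : K i₀ = ⊤)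

/-- The homomorphism sending `(g, x)` to the family which agrees with `x` off the free coordinate
`i₀` and has sum `g`. -/
def prescribeSum : G × (∀ j, K j) →+ ∀ j, K j :=
  .snd _ _ + (AddMonoidHom.single (fun j ↦ K j) i₀).comp
    ((.fst _ _ - (sumHom K).comp (.snd _ _)).codRestrict (K i₀) fun _ ↦ hi₀ ▸ AddSubgroup.mem_top _)

theorem prescribeSum_apply (p : G × ∀ j, K j) : prescribeSum hi₀ p =
    p.2 + Pi.single i₀ ⟨p.1 - sumHom K p.2, hi₀ ▸ AddSubgroup.mem_top _⟩ := rfl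

theorem sumHom_prescribeSum (p : G × ∀ j, K j) : sumHom K (prescribeSum hi₀ p) = p.1 := by
  simp [prescribeSum_apply, sumHom_single]

theorem prescribeSum_sumHom (x : ∀ j, K j) : prescribeSum hi₀ (sumHom K x, x) = x := by
  simp [prescribeSum_apply]

theorem prescribeSum_add_single {i : J} (k : K i) (g : G) (x : ∀ j, K j) :
    prescribeSum hi₀ (k + g, Pi.single i k + x) = Pi.single i k + prescribeSum hi₀ (g, x) := by
  have hk : prescribeSum hi₀ ((k : G), Pi.single i k) = Pi.single i k := by
    rw [← sumHom_single, prescribeSum_sumHom]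
  rw [← Prod.mk_add_mk, map_add, hk]

variable [TopologicalSpace G] [IsTopologicalAddGroup G]

theorem continuous_prescribeSum : Continuous (prescribeSum hi₀) := by
  have hsum : Continuous fun p : G × ∀ j, K j ↦ p.1 - sumHom K p.2 :=
    continuous_fst.sub ((continuous_sumHom K).comp continuous_snd)
  exact continuous_snd.add ((continuous_single i₀).comp (hsum.subtype_mk _))

variable [MeasurableSpace G] [BorelSpace G] (ν : ∀ j, Measure (K j)) [∀ j, (ν j).IsAddHaarMeasure]
  [∀ j, IsProbabilityMeasure (ν j)]

theorem le_stabilizer_setOf_le_measureReal_prescribeSum {i : J} {N : Set (∀ j, K j)}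
    (hN : MeasurableSet[piFinset {i}ᶜ] N) (c : ℝ) :
    K i ≤ AddAction.stabilizer G
      {g | c ≤ (Measure.pi ν).real (Prod.mk g ⁻¹' (prescribeSum hi₀ ⁻¹' N))} := by
  intro k hk
  refine AddAction.mem_stabilizer_set.2 fun g ↦ ?_
  have hshift : Prod.mk g ⁻¹' (prescribeSum hi₀ ⁻¹' N) = (Pi.single i ⟨k, hk⟩ + ·) ⁻¹'
      (Prod.mk (k + g) ⁻¹' (prescribeSum hi₀ ⁻¹' N)) := by
    ext x
    simp only [mem_preimage, prescribeSum_add_single hi₀ ⟨k, hk⟩ g x]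
    refine mem_iff_mem_of_forall_mem_eq hN fun j hj ↦ ?_
    have hji : j ≠ i := by simpa using hj
    simp [hji]
  simp only [mem_ofPred_eq, vadd_eq_add, hshift, measureReal_def, measure_preimage_add]

variable [SecondCountableTopology G]

theorem measurableSet_preimage_sumHom {i : J} {B : Set G} (hB : MeasurableSet B)
    (hKB : K i ≤ AddAction.stabilizer G B) :
    MeasurableSet[piFinset {i}ᶜ] (sumHom K ⁻¹' B) := by
  refine ⟨{z | ∑ j, (z j : G) ∈ B}, ?_, ?_⟩
  · exact measurableSet_preimage (Finset.measurable_sum _ fun j _ ↦ by fun_prop) hB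
  · ext x
    have hsum : sumHom K x = x i + ∑ j : ({i}ᶜ : Finset J), (x j : G) := by
      rw [sumHom_apply, Fintype.sum_eq_add_sum_compl i, Finset.sum_coe_sort _ fun j ↦ (x j : G)]
    rw [mem_preimage, mem_preimage, hsum]
    exact (AddAction.mem_stabilizer_set.1 (hKB (x i).2) _).symm

variable [CompactSpace G] [∀ j, CompactSpace (K j)] {μ : Measure G} [μ.IsAddHaarMeasure]
  [IsProbabilityMeasure μ]

theorem measurePreserving_prescribeSum :
    MeasurePreserving (prescribeSum hi₀) (μ.prod (.pi ν)) (.pi ν) :=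
  AddMonoidHom.measurePreserving (continuous_prescribeSum hi₀)
    (fun x ↦ ⟨_, prescribeSum_sumHom hi₀ x⟩) (by simp)

theorem exists_removal_of_iInter_eq_empty (hi₀ : K i₀ = ⊤) {B : J → Set G}
    (hB : ∀ i, MeasurableSet (B i)) (hKB : ∀ i, K i ≤ AddAction.stabilizer G (B i))
    {F : J → Set (∀ j, K j)} (hF : ∀ i, MeasurableSet[piFinset {i}ᶜ] (F i))
    (hFempty : ⋂ i, F i = ∅) {ε : ℝ}
    (hFε : ∀ i, (Measure.pi ν).real (sumHom K ⁻¹' B i \ F i) ≤ (Fintype.card J + 1 : ℝ)⁻¹ * ε) :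
    ∃ C : J → Set G, (∀ i, MeasurableSet (C i)) ∧ (∀ i, K i ≤ AddAction.stabilizer G (C i)) ∧
      (∀ i, μ.real (C i) ≤ ε) ∧ ⋂ i, B i \ C i = ∅ := by
  let c : ℝ := (Fintype.card J + 1 : ℝ)⁻¹
  have hc : 0 < c := by positivity
  let N i := sumHom K ⁻¹' B i \ F i
  have hN i : MeasurableSet[piFinset {i}ᶜ] (N i) :=
    (measurableSet_preimage_sumHom (hB i) (hKB i)).diff (hF i)
  have hΦ := measurePreserving_prescribeSum (μ := μ) hi₀ ν
  have hΦN i : MeasurableSet (prescribeSum hi₀ ⁻¹' N i) := hΦ.measurable (piFinset.le _ _ (hN i))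
  let C i := {g | c ≤ (Measure.pi ν).real (Prod.mk g ⁻¹' (prescribeSum hi₀ ⁻¹' N i))}
  refine ⟨C, fun i ↦ ?_, fun i ↦ le_stabilizer_setOf_le_measureReal_prescribeSum hi₀ ν (hN i) c,
    fun i ↦ ?_, iInter_eq_empty_iff.2 fun g ↦ ?_⟩
  · exact measurableSet_le measurable_const (measurable_measure_prodMk_left (hΦN i)).ennreal_toReal
  · refine le_of_mul_le_mul_left ?_ hc
    calc c * μ.real (C i) ≤ (μ.prod (.pi ν)).real (prescribeSum hi₀ ⁻¹' N i) :=
          mul_measureReal_setOf_le_le_measureReal_prod (hΦN i) c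
      _ = (Measure.pi ν).real (N i) :=
          hΦ.measureReal_preimage (piFinset.le _ _ (hN i)).nullMeasurableSet
      _ ≤ c * ε := hFε i
  · by_contra! hg
    obtain ⟨x, hx⟩ := exists_forall_notMem_of_measureReal_le
      (T := fun i ↦ Prod.mk g ⁻¹' (prescribeSum hi₀ ⁻¹' N i)) (fun i ↦ (not_le.1 (hg i).2).le) <| by
        rw [← div_eq_mul_inv, div_lt_one (by positivity)]
        exact lt_add_one _
    have hxF i : prescribeSum hi₀ (g, x) ∈ F i := not_not.1 fun hxF ↦ hx i <| by
      refine ⟨?_, hxF⟩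
      rw [mem_preimage, sumHom_prescribeSum]
      exact (hg i).1
    exact hFempty.subset (mem_iInter.2 hxF)

theorem exists_subgroup_removal_of_eq_top (J : Type u) [Finite J] {ε : ℝ} (hε : 0 < ε) :
    ∃ δ > 0, ∀ (G : Type v) [AddCommGroup G] [TopologicalSpace G] [IsTopologicalAddGroup G]
      [CompactSpace G] [SecondCountableTopology G] [MeasurableSpace G] [BorelSpace G]
      (μ : Measure G) [μ.IsAddHaarMeasure] [IsProbabilityMeasure μ] (K : J → AddSubgroup G)
      [∀ j, CompactSpace (K j)] (i₀ : J) (_ : K i₀ = ⊤) (B : J → Set G),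
      (∀ i, MeasurableSet (B i)) → (∀ i, K i ≤ AddAction.stabilizer G (B i)) →
      μ.real (⋂ i, B i) ≤ δ → ∃ C : J → Set G, (∀ i, MeasurableSet (C i)) ∧
        (∀ i, K i ≤ AddAction.stabilizer G (C i)) ∧ (∀ i, μ.real (C i) ≤ ε) ∧
        ⋂ i, B i \ C i = ∅ := by
  classical
  have := Fintype.ofFinite J
  obtain ⟨δ, hδ, hremoval⟩ := exists_simplex_removal.{u, v} J
    (ε := (Fintype.card J + 1 : ℝ)⁻¹ * ε) (by positivity)
  refine ⟨δ, hδ, fun G _ _ _ _ _ _ _ μ _ _ K _ i₀ hi₀ B hB hKB hBδ ↦ ?_⟩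
  choose ν hν hν' using fun j ↦ exists_isAddHaarMeasure_isProbabilityMeasure (K j)
  have hΘ := measurePreserving_sumHom (μ := μ) ν fun g ↦ ⟨_, sumHom_prescribeSum hi₀ (g, 0)⟩
  obtain ⟨F, hF, hFε, hFempty⟩ := hremoval (fun j ↦ K j) ν (fun i ↦ sumHom K ⁻¹' B i)
    (fun i ↦ measurableSet_preimage_sumHom (hB i) (hKB i)) <| by
      rwa [← preimage_iInter, hΘ.measureReal_preimage (MeasurableSet.iInter hB).nullMeasurableSet]
  exact exists_removal_of_iInter_eq_empty ν hi₀ hB hKB hF hFempty hFε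

end SubgroupRemoval

section HomRemoval

universe v w

open scoped Pointwise

theorem eq_empty_of_stabilizer_eq_top {G : Type*} [AddGroup G] [MeasurableSpace G] {μ : Measure G}
    [IsProbabilityMeasure μ] {C : Set G} (hC : AddAction.stabilizer G C = ⊤) (hμC : μ.real C < 1) :
    C = ∅ := by
  by_contra! hne
  obtain ⟨g, hg⟩ := hne
  have huniv : C = univ := eq_univ_of_forall fun h ↦ by
    have hstab : h - g ∈ AddAction.stabilizer G C := hC ▸ AddSubgroup.mem_top _
    simpa using (AddAction.mem_stabilizer_set.1 hstab g).2 hg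
  simp [huniv] at hμC

theorem exists_subgroup_removal (J : Type u) [Finite J] {ε : ℝ} (hε : 0 < ε) :
    ∃ δ > 0, ∀ (G : Type v) [AddCommGroup G] [TopologicalSpace G] [IsTopologicalAddGroup G]
      [CompactSpace G] [SecondCountableTopology G] [MeasurableSpace G] [BorelSpace G]
      (μ : Measure G) [μ.IsAddHaarMeasure] [IsProbabilityMeasure μ] (K : J → AddSubgroup G)
      [∀ j, CompactSpace (K j)] (B : J → Set G),
      (∀ i, MeasurableSet (B i)) → (∀ i, K i ≤ AddAction.stabilizer G (B i)) →
      μ.real (⋂ i, B i) ≤ δ → ∃ C : J → Set G, (∀ i, MeasurableSet (C i)) ∧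
        (∀ i, K i ≤ AddAction.stabilizer G (C i)) ∧ (∀ i, μ.real (C i) ≤ ε) ∧
        ⋂ i, B i \ C i = ∅ := by
  obtain ⟨δ, hδ, hremoval⟩ := exists_subgroup_removal_of_eq_top.{u, v} (Option J)
    (ε := min ε 2⁻¹) (by positivity)
  refine ⟨δ, hδ, fun G _ _ _ _ _ _ _ μ _ _ K _ B hB hKB hBδ ↦ ?_⟩
  have (o : Option J) : CompactSpace ↥(o.elim (⊤ : AddSubgroup G) K : AddSubgroup G) := by
    cases o with
    | none => exact isCompact_iff_compactSpace.1 isCompact_univ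
    | some j => exact inferInstanceAs (CompactSpace (K j))
  obtain ⟨C, hC, hKC, hCε, hempty⟩ := hremoval G μ (fun o ↦ o.elim ⊤ K) none rfl
    (fun o ↦ o.elim univ B) (Option.forall.2 ⟨.univ, hB⟩) (Option.forall.2 ⟨by simp, hKB⟩)
    (by simpa [iInter_option] using hBδ)
  have hnone : C none = ∅ := eq_empty_of_stabilizer_eq_top (top_le_iff.1 (hKC none))
    ((hCε none).trans_lt <| (min_le_right _ _).trans_lt (by norm_num))
  refine ⟨fun i ↦ C (some i), fun i ↦ hC _, fun i ↦ hKC (some i),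
    fun i ↦ (hCε _).trans (min_le_left _ _), ?_⟩
  simpa [iInter_option, hnone] using hempty

variable {G : Type*} [AddCommGroup G] {Y : Type*} [AddCommGroup Y] (ψ : G →+ Y)

theorem ker_le_stabilizer_preimage (A : Set Y) : ψ.ker ≤ AddAction.stabilizer G (ψ ⁻¹' A) :=
  fun k hk ↦ AddAction.mem_stabilizer_set.2 fun g ↦ by simp [AddMonoidHom.mem_ker.1 hk]

theorem preimage_image_eq_of_ker_le_stabilizer {C : Set G}
    (hC : ψ.ker ≤ AddAction.stabilizer G C) : ψ ⁻¹' (ψ '' C) = C := by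
  refine (subset_preimage_image ψ C).antisymm' ?_
  rintro g ⟨c, hc, hcg⟩
  have hker : g - c ∈ ψ.ker := by simp [AddMonoidHom.mem_ker, hcg]
  simpa using (AddAction.mem_stabilizer_set.1 (hC hker) c).2 hc

variable {ψ} [TopologicalSpace G] [IsTopologicalAddGroup G] [CompactSpace G]
  [SecondCountableTopology G] [MeasurableSpace G] [BorelSpace G] [TopologicalSpace Y]
  [IsTopologicalAddGroup Y] [CompactSpace Y] [MeasurableSpace Y] [BorelSpace Y]

theorem measure_le_measure_preimage_of_subset_range (hψ : Continuous ψ) (μ : Measure G)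
    [μ.IsAddHaarMeasure] [IsProbabilityMeasure μ] (ν : Measure Y) [ν.IsAddHaarMeasure]
    [IsProbabilityMeasure ν] {E : Set Y} (hE : MeasurableSet E) (hrange : E ⊆ range ψ) :
    ν E ≤ μ (ψ ⁻¹' E) := by
  have hadd : MeasurePreserving ((AddMonoidHom.id Y).coprod ψ) (ν.prod μ) ν :=
    AddMonoidHom.measurePreserving (continuous_fst.add (hψ.comp continuous_snd))
      (fun y ↦ ⟨(y, 0), by simp⟩) (by simp)
  rw [← hadd.measure_preimage hE.nullMeasurableSet, Measure.prod_apply (hadd.measurable hE)]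
  refine lintegral_le_const (ae_of_all _ fun y ↦ ?_)
  by_cases hy : y ∈ range ψ
  · obtain ⟨h, rfl⟩ := hy
    rw [← measure_preimage_add μ h (ψ ⁻¹' E)]
    exact (measure_mono fun g hg ↦ by simpa using hg)
  · refine (measure_mono fun g hg ↦ hy ?_).trans (measure_empty (μ := μ) ▸ zero_le)
    obtain ⟨h, hh⟩ := hrange hg
    exact ⟨h - g, by simp [hh]⟩

theorem exists_hom_removal (J : Type u) [Finite J] {ε : ℝ} (hε : 0 < ε) :
    ∃ δ > 0, ∀ (G : Type v) [AddCommGroup G] [TopologicalSpace G] [IsTopologicalAddGroup G]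
      [CompactSpace G] [PolishSpace G] [MeasurableSpace G] [BorelSpace G]
      (μ : Measure G) [μ.IsAddHaarMeasure] [IsProbabilityMeasure μ]
      (Y : J → Type w) [∀ j, AddCommGroup (Y j)] [∀ j, TopologicalSpace (Y j)]
      [∀ j, IsTopologicalAddGroup (Y j)] [∀ j, CompactSpace (Y j)] [∀ j, PolishSpace (Y j)]
      [∀ j, MeasurableSpace (Y j)] [∀ j, BorelSpace (Y j)] (ν : ∀ j, Measure (Y j))
      [∀ j, (ν j).IsAddHaarMeasure] [∀ j, IsProbabilityMeasure (ν j)] (ψ : ∀ j, G →+ Y j)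
      (A : ∀ j, Set (Y j)), (∀ j, Continuous (ψ j)) → (∀ j, MeasurableSet (A j)) →
      μ.real (⋂ j, ψ j ⁻¹' A j) ≤ δ → ∃ E : ∀ j, Set (Y j), (∀ j, MeasurableSet (E j)) ∧
        (∀ j, (ν j).real (E j) ≤ ε) ∧ ⋂ j, ψ j ⁻¹' (A j \ E j) = ∅ := by
  obtain ⟨δ, hδ, hremoval⟩ := exists_subgroup_removal.{u, v} J hε
  refine ⟨δ, hδ, fun G _ _ _ _ _ _ _ μ _ _ Y _ _ _ _ _ _ _ ν _ _ ψ A hψ hA hAδ ↦ ?_⟩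
  have (j : J) : CompactSpace (ψ j).ker :=
    isCompact_iff_compactSpace.1 (isClosed_singleton.preimage (hψ j)).isCompact
  obtain ⟨C, hC, hKC, hCε, hempty⟩ := hremoval G μ (fun j ↦ (ψ j).ker) (fun j ↦ ψ j ⁻¹' A j)
    (fun j ↦ (hψ j).measurable (hA j)) (fun j ↦ ker_le_stabilizer_preimage (ψ j) (A j)) hAδ
  have hpre j : ψ j ⁻¹' (ψ j '' C j) = C j := preimage_image_eq_of_ker_le_stabilizer (ψ j) (hKC j)
  have himage j : MeasurableSet (ψ j '' C j) := by
    rw [← inter_eq_left.2 (image_subset_range (ψ j) (C j)),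
      ← (hψ j).measurable.measurableSet_preimage_iff_inter_range
        (isCompact_range (hψ j)).isClosed.measurableSet, hpre]
    exact hC j
  refine ⟨fun j ↦ ψ j '' C j, himage, fun j ↦ ?_, by simpa only [preimage_sdiff, hpre] using hempty⟩
  refine (ENNReal.toReal_mono (measure_ne_top _ _) ?_).trans (hCε j)
  simpa only [hpre] using measure_le_measure_preimage_of_subset_range (hψ j) μ (ν j) (himage j)
    (image_subset_range _ _)

end HomRemoval

section LinearRemoval

theorem continuous_Lhom {r m : ℕ} (L : Matrix (Fin r) (Fin m) ℤ) (Y : Type*) [AddCommGroup Y]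
    [TopologicalSpace Y] [IsTopologicalAddGroup Y] : Continuous (Lhom L Y) :=
  continuous_pi fun i ↦
    continuous_finsetSum Finset.univ fun j _ ↦ (continuous_apply (A := fun _ ↦ Y) j).zsmul (L i j)

theorem removal_lemma_circle_general (m : ℕ) {ε : ℝ} (hε : 0 < ε) :
    ∃ δ > 0, ∀ (Y : Type u) [AddCommGroup Y] [TopologicalSpace Y] [IsTopologicalAddGroup Y]
      [CompactSpace Y] [PolishSpace Y] [MeasurableSpace Y] [BorelSpace Y]
      (μ : Measure Y) [μ.IsAddHaarMeasure] [IsProbabilityMeasure μ]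
      {r : ℕ} (L : Matrix (Fin r) (Fin m) ℤ)
      (μL : Measure (Lhom L Y).ker) [μL.IsAddHaarMeasure] [IsProbabilityMeasure μL]
      (A : Fin m → Set Y), (∀ i, MeasurableSet (A i)) →
      μL.real {x | ∀ i, (x : Fin m → Y) i ∈ A i} ≤ δ →
      ∃ E : Fin m → Set Y, (∀ i, MeasurableSet (E i)) ∧ (∀ i, μ.real (E i) ≤ ε) ∧
        ∀ x : (Lhom L Y).ker, ¬ ∀ i, (x : Fin m → Y) i ∈ A i \ E i := by
  obtain ⟨δ, hδ, hremoval⟩ := exists_hom_removal.{0, u, u} (Fin m) hε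
  refine ⟨δ, hδ, fun Y _ _ _ _ _ _ _ μ _ _ r L μL _ _ A hA hAδ ↦ ?_⟩
  have hclosed : IsClosed ((Lhom L Y).ker : Set (Fin m → Y)) :=
    isClosed_singleton.preimage (continuous_Lhom L Y)
  have : CompactSpace (Lhom L Y).ker := isCompact_iff_compactSpace.1 hclosed.isCompact
  have : PolishSpace (Lhom L Y).ker := hclosed.polishSpace
  obtain ⟨E, hE, hEε, hempty⟩ := hremoval (Lhom L Y).ker μL (fun _ ↦ Y) (fun _ ↦ μ)
    (fun i ↦ (Pi.evalAddMonoidHom (fun _ ↦ Y) i).comp (Lhom L Y).ker.subtype) A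
    (fun i ↦ (continuous_apply i).comp continuous_subtype_val) hA
    (by simpa [preimage, ofPred_forall] using hAδ)
  exact ⟨E, hE, hEε, by simpa [iInter_eq_empty_iff] using hempty⟩

end LinearRemoval

instance : IsProbabilityMeasure (volume : Measure 𝕋) := ⟨by simp [AddCircle.measure_univ]⟩

/-- **Removal lemma for linear configurations in subsets of the circle.**
Let `r ≤ m` be positive integers and `L` an `r × m` integer matrix of full rank `r`.
For every `ε > 0` there is `δ > 0` such that: if `μL` is the normalized (probability) Haar
measure on `ker_𝕋 L` and `A₁, …, A_m` are Borel measurable subsets of `𝕋` with solution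
measure `S_L(A₁, …, A_m) = μL((A₁ × ⋯ × A_m) ∩ ker_𝕋 L) ≤ δ`, then there are Borel
measurable sets `E₁, …, E_m ⊆ 𝕋` of measure at most `ε` such that
`((A₁ \ E₁) × ⋯ × (A_m \ E_m)) ∩ ker_𝕋 L = ∅`. -/
theorem removal_lemma_circle {r m : ℕ} (hr : 0 < r) (hrm : r ≤ m)
    (L : Matrix (Fin r) (Fin m) ℤ)
    (hrank : (L.map (Int.cast : ℤ → ℚ)).rank = r)
    {ε : ℝ} (hε : 0 < ε) :
    ∃ δ : ℝ, 0 < δ ∧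
      ∀ (μL : Measure (kerT L)), μL.IsAddHaarMeasure → IsProbabilityMeasure μL →
        ∀ A : Fin m → Set 𝕋, (∀ i, MeasurableSet (A i)) →
          (μL {x : kerT L | ∀ i, (x : Fin m → 𝕋) i ∈ A i}).toReal ≤ δ →
          ∃ E : Fin m → Set 𝕋,
            (∀ i, MeasurableSet (E i)) ∧
            (∀ i, (volume (E i)).toReal ≤ ε) ∧
            ∀ x : kerT L, ¬ (∀ i, (x : Fin m → 𝕋) i ∈ A i \ E i) := by
  obtain ⟨δ, hδ, hremoval⟩ := removal_lemma_circle_general m hε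
  unfold kerT
  exact ⟨δ, hδ, fun μL _ _ ↦ hremoval 𝕋 volume L μL⟩
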